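/- Let n ≥ 5 and δ = 1/10. There is a constant C (depending only on n and η, and independent of ε and x) such that for every ε > 0, every x ∈ ℝ^{n-1}, and every t ∈ ℝ, the kernel K₀^ε(x,t) = ∫_{−δ}^{δ} ((σ_s^{(0)})^∨(x,t) − (σ_0^{(0)})^∨(x,t))/(s²+ε²) ds satisfies |K₀^ε(x,t)| ≤ C(1+|t|)^{(2−n)/2 + 1}. -/

import Mathlib

open MeasureTheory Real FourierTransform Filter
open scoped ENNReal RealInnerProductSpace

noncomputable section

/-- `ℝⁿ = ℝ^{n-1} × ℝ`, realized as `EuclideanSpace ℝ (Fin (m+1))` with `m = n-1`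
spatial coordinates and the last coordinate playing the role of time. -/
abbrev Spacetime (m : ℕ) := EuclideanSpace ℝ (Fin (m + 1))

namespace Wave

variable {m : ℕ}

/-- The time coordinate `τ` of a point `z = (ξ, τ)`. -/
def timeCoord (z : Spacetime m) : ℝ := z (Fin.last m)

/-- `g(ξ,τ) = |ξ|² - τ²`, written using `|ξ|² = ‖z‖² - τ²`. -/
def waveSymbol (z : Spacetime m) : ℝ := ‖z‖ ^ 2 - 2 * timeCoord z ^ 2

/-- The canonical surface measure `σ_s` on the level set `g⁻¹(s)` of
`g(ξ,τ) = |ξ|² - τ²`: the `(n-1)`-dimensional Hausdorff measure restricted to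
`g⁻¹(s)` (with the origin deleted). -/
def levelMeasure (m : ℕ) (s : ℝ) : Measure (Spacetime m) :=
  (μH[(m : ℝ)]).restrict {z | waveSymbol z = s ∧ z ≠ 0}

/-- `(σ_s^{(0)})^∨(w)`: the inverse Fourier transform of the truncated surface measure
`σ_s^{(0)} = η σ_s`, evaluated at `w = (x,t)`. -/
def sigmaCheck (η : Spacetime m → ℝ) (s : ℝ) (w : Spacetime m) : ℂ :=
  ∫ z, (η z : ℂ) * Complex.exp (2 * (π : ℂ) * Complex.I * ((⟪z, w⟫ : ℝ) : ℂ))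
    ∂(levelMeasure m s)

/-- The kernel `K₀^ε(x,t) = ∫_{-δ}^{δ} ((σ_s^{(0)})^∨(x,t) - (σ_0^{(0)})^∨(x,t))/(s²+ε²) ds`
with `δ = 1/10`. -/
def Kzero (η : Spacetime m → ℝ) (ε : ℝ) (w : Spacetime m) : ℂ :=
  ∫ s in (-(1 / 10 : ℝ))..(1 / 10 : ℝ),
    (sigmaCheck η s w - sigmaCheck η 0 w) / (((s ^ 2 + ε ^ 2 : ℝ)) : ℂ)

/-- The point `(x, t) ∈ ℝ^{n-1} × ℝ` as an element of spacetime. -/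
def embed (x : EuclideanSpace ℝ (Fin m)) (t : ℝ) : Spacetime m :=
  (EuclideanSpace.equiv (Fin (m + 1)) ℝ).symm (Fin.snoc ((EuclideanSpace.equiv (Fin m) ℝ) x) t)

/-- The partial-convolution operator `T_t^{(ε)} g (x) = ∫ K₀^ε(x-y, t) g(y) dy` acting in
the spatial variables only. -/
def Top (η : Spacetime m → ℝ) (ε t : ℝ) (g : EuclideanSpace ℝ (Fin m) → ℂ)
    (x : EuclideanSpace ℝ (Fin m)) : ℂ :=
  ∫ y, Kzero η ε (embed (x - y) t) * g y

end Wave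

open Wave

/-! Folding `s ↦ -s` turns the kernel into the integral over `(0, δ)` of the second difference of
`s ↦ σ_s^∨(x, t)` at `0` against `1 / (s² + ε²)`. With `T = 1 + |t|` and `α = (n - 4) / 2`, this
second difference is at most a constant times `T ^ (-α - 1) * min 1 (s T)²`, and integrating the
minimum over `s` costs one factor `T`, whatever `ε` is.

The area formula on the two sheets `τ = ± √(|ξ|² - s)`, followed by slicing in the directions of
`ξ` orthogonal to `x`, writes `σ_s^∨(x, t)` as an average over `u` of one-dimensional oscillatory
integrals `∫ e(t τ) b(s, τ) (τ² - u² + s)₊ ^ α dτ`. Integration by parts in `τ` exchanges one order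
of decay in `t` for one power `α`, so the decay reduces to the modulus of continuity in `L¹` of a
truncated power. Each derivative in `s` lowers `α` by one as well, hence the second difference is
first estimated for `α + 3` and then carried down the same recurrence. -/

section

open scoped Topology NNReal ContDiff

namespace Wave

@[fun_prop]
theorem continuous_coe_fourierChar_comp {X : Type*} [TopologicalSpace X] {φ : X → ℝ}
    (hφ : Continuous φ) : Continuous fun x => (𝐞 (φ x) : ℂ) :=
  continuous_subtype_val.comp (continuous_fourierChar.comp hφ)

theorem coe_fourierChar_add (x y : ℝ) : (𝐞 (x + y) : ℂ) = 𝐞 x * 𝐞 y := by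
  rw [AddChar.map_add_eq_mul, Circle.coe_mul]

theorem integrable_fourierChar_mul {X : Type*} [TopologicalSpace X] [MeasurableSpace X]
    [OpensMeasurableSpace X] {μ : Measure X} {φ : X → ℝ} (hφ : Continuous φ) {f : X → ℂ}
    (hf : Integrable f μ) : Integrable (fun x => (𝐞 (φ x) : ℂ) * f x) μ :=
  hf.bdd_mul (c := 1) (continuous_coe_fourierChar_comp hφ).measurable.aestronglyMeasurable
    (Eventually.of_forall fun _ => (Circle.norm_coe _).le)

theorem norm_integral_fourierChar_mul_le {X : Type*} [MeasurableSpace X] (μ : Measure X)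
    (φ : X → ℝ) (f : X → ℂ) : ‖∫ x, (𝐞 (φ x) : ℂ) * f x ∂μ‖ ≤ ∫ x, ‖f x‖ ∂μ :=
  (norm_integral_le_integral_norm _).trans_eq (by simp only [norm_mul, Circle.norm_coe, one_mul])

theorem hasDerivAt_fourierChar_mul (t τ : ℝ) :
    HasDerivAt (fun τ => (𝐞 (t * τ) : ℂ)) (2 * π * Complex.I * t * 𝐞 (t * τ)) τ := by
  have := (hasDerivAt_fourierChar (t * τ)).scomp τ ((hasDerivAt_id τ).const_mul t)
  refine this.congr_deriv ?_
  rw [mul_one, Complex.real_smul]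
  ring

theorem two_mul_norm_integral_fourierChar_mul_le {f : ℝ → ℂ} (hf : Integrable f) {t : ℝ}
    (ht : t ≠ 0) : 2 * ‖∫ τ, (𝐞 (t * τ) : ℂ) * f τ‖ ≤ ∫ τ, ‖f (τ + 1 / (2 * |t|)) - f τ‖ := by
  set h := 1 / (2 * |t|)
  have hexp : (𝐞 (-(t * h)) : ℂ) = -1 := by
    have : t * h = 1 / 2 ∨ t * h = -(1 / 2) := by
      rcases abs_cases t with ⟨e, -⟩ | ⟨e, -⟩ <;> simp only [h, e] <;> [left; right] <;> field_simp
    rw [fourierChar_apply]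
    rcases this with e | e <;> rw [e]
    · rw [show ((2 * π * -(1 / 2) : ℝ) : ℂ) * Complex.I = -(π * Complex.I) by push_cast; ring,
        Complex.exp_neg, Complex.exp_pi_mul_I]
      norm_num
    · rw [show ((2 * π * -(-(1 / 2)) : ℝ) : ℂ) * Complex.I = π * Complex.I by push_cast; ring,
        Complex.exp_pi_mul_I]
  have hshift : ∫ τ, (𝐞 (t * τ) : ℂ) * f (τ + h) = -∫ τ, (𝐞 (t * τ) : ℂ) * f τ := by
    rw [← integral_add_right_eq_self (fun τ => (𝐞 (t * τ) : ℂ) * f τ) h, ← integral_neg]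
    refine integral_congr_ae (Eventually.of_forall fun τ => ?_)
    have : t * τ = t * (τ + h) + -(t * h) := by ring
    simp only []
    rw [this, coe_fourierChar_add, hexp]
    ring
  have key : ∫ τ, (𝐞 (t * τ) : ℂ) * (f (τ + h) - f τ) = -2 * ∫ τ, (𝐞 (t * τ) : ℂ) * f τ := by
    simp only [mul_sub]
    rw [integral_sub (integrable_fourierChar_mul (by fun_prop) (hf.comp_add_right h))
      (integrable_fourierChar_mul (by fun_prop) hf), hshift]
    ring
  have := norm_integral_fourierChar_mul_le volume (fun τ => t * τ) fun τ => f (τ + h) - f τ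
  rw [key, norm_mul] at this
  simpa using this

theorem norm_integral_fourierChar_mul_le_rpow {f : ℝ → ℂ} (hf : Integrable f) {A β : ℝ}
    (hβ : 0 ≤ β) (hA : ∫ τ, ‖f τ‖ ≤ A)
    (hmod : ∀ h, 0 < h → h ≤ 1 → ∫ τ, ‖f (τ + h) - f τ‖ ≤ A * h ^ β) (t : ℝ) :
    ‖∫ τ, (𝐞 (t * τ) : ℂ) * f τ‖ ≤ 2 ^ β * A * (1 + |t|) ^ (-β) := by
  have hA0 : 0 ≤ A := (integral_nonneg fun _ => norm_nonneg _).trans hA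
  have hT : 0 < 1 + |t| := by positivity
  rcases le_total |t| 1 with h1 | h1
  · calc ‖∫ τ, (𝐞 (t * τ) : ℂ) * f τ‖ ≤ A := (norm_integral_fourierChar_mul_le _ _ _).trans hA
      _ ≤ (2 / (1 + |t|)) ^ β * A :=
        le_mul_of_one_le_left hA0 (one_le_rpow ((one_le_div hT).2 (by linarith)) hβ)
      _ = 2 ^ β * A * (1 + |t|) ^ (-β) := by
        rw [div_rpow zero_le_two hT.le, rpow_neg hT.le]; ring
  · have ht : 0 < |t| := zero_lt_one.trans_le h1
    have h := (two_mul_norm_integral_fourierChar_mul_le hf (abs_pos.1 ht)).trans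
      (hmod (1 / (2 * |t|)) (by positivity) ((div_le_one (by positivity)).2 (by linarith)))
    calc ‖∫ τ, (𝐞 (t * τ) : ℂ) * f τ‖ ≤ A * (1 / (2 * |t|)) ^ β := by
          linarith [norm_nonneg (∫ τ, (𝐞 (t * τ) : ℂ) * f τ)]
      _ ≤ A * (1 / (1 + |t|)) ^ β := by gcongr; linarith
      _ = 1 * A * (1 + |t|) ^ (-β) := by rw [one_div, inv_rpow hT.le, rpow_neg hT.le, one_mul]
      _ ≤ 2 ^ β * A * (1 + |t|) ^ (-β) := by gcongr; exact one_le_rpow one_le_two hβ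

theorem integral_fourierChar_mul_deriv {f f' : ℝ → ℂ} (hf : Continuous f)
    (hsupp : HasCompactSupport f) {S : Set ℝ} (hS : S.Countable)
    (hderiv : ∀ τ ∉ S, HasDerivAt f (f' τ) τ) (hf' : Integrable f') (t : ℝ) :
    ∫ τ, (𝐞 (t * τ) : ℂ) * f' τ = -(2 * π * Complex.I * t * ∫ τ, (𝐞 (t * τ) : ℂ) * f τ) := by
  set F : ℝ → ℂ := fun τ => 𝐞 (t * τ) * f τ
  set F' : ℝ → ℂ := fun τ => 𝐞 (t * τ) * f' τ + 2 * π * Complex.I * t * (𝐞 (t * τ) * f τ)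
  have hFc : Continuous F := by fun_prop
  have hFs : HasCompactSupport F := hsupp.mul_left
  have i1 := integrable_fourierChar_mul (φ := fun τ => t * τ) (by fun_prop) hf'
  have i2 := (hFc.integrable_of_hasCompactSupport (μ := volume) hFs).const_mul
    (2 * π * Complex.I * t)
  have hF : ∀ τ ∉ S, HasDerivAt F (F' τ) τ := fun τ hτ =>
    ((hasDerivAt_fourierChar_mul t τ).mul (hderiv τ hτ)).congr_deriv (by simp only [F']; ring)
  obtain ⟨R, -, hR⟩ := hFs.exists_pos_le_norm
  have hFF : ∀ r, R ≤ r → ∫ τ in (-r)..r, F' τ = 0 := fun r hr => by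
    rw [integral_eq_of_hasDerivAt_off_countable F F' hS hFc.continuousOn
      (fun τ hτ => hF τ hτ.2) (i1.add i2).intervalIntegrable,
      hR r (hr.trans (le_abs_self r)), hR (-r) (by rw [norm_neg]; exact hr.trans (le_abs_self r)),
      sub_zero]
  have hlim : ∫ τ, F' τ = 0 := tendsto_nhds_unique
    (intervalIntegral_tendsto_integral (i1.add i2) tendsto_neg_atTop_atBot tendsto_id)
    (tendsto_const_nhds.congr' ((eventually_ge_atTop R).mono fun r hr => (hFF r hr).symm))
  have hsum : ∫ τ, F' τ = _ := integral_add i1 i2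
  rw [hlim, integral_const_mul] at hsum
  exact eq_neg_of_add_eq_zero_left hsum.symm

/-- The power function `y₊^α`; unlike `(max y 0) ^ α` it vanishes on `y ≤ 0` for `α = 0` too. -/
def posPow (α y : ℝ) : ℝ := if 0 < y then y ^ α else 0

theorem posPow_of_nonpos (α : ℝ) {y : ℝ} (hy : y ≤ 0) : posPow α y = 0 := if_neg hy.not_gt

theorem posPow_of_pos (α : ℝ) {y : ℝ} (hy : 0 < y) : posPow α y = y ^ α := if_pos hy

theorem posPow_nonneg (α y : ℝ) : 0 ≤ posPow α y := by
  unfold posPow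
  split_ifs with h
  exacts [rpow_nonneg h.le _, le_rfl]

theorem posPow_add_one (α y : ℝ) : posPow (α + 1) y = y * posPow α y := by
  unfold posPow
  split_ifs with h
  · rw [rpow_add_one h.ne', mul_comm]
  · rw [mul_zero]

@[fun_prop]
theorem measurable_posPow (α : ℝ) : Measurable (posPow α) :=
  Measurable.ite measurableSet_Ioi (by fun_prop) measurable_const

theorem continuous_posPow {α : ℝ} (hα : 0 < α) : Continuous (posPow α) := by
  have : posPow α = fun y => (max y 0) ^ α := by
    ext y
    unfold posPow
    split_ifs with h
    · rw [max_eq_left h.le]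
    · rw [max_eq_right (not_lt.1 h), zero_rpow hα.ne']
  rw [this]
  exact (continuous_id.max continuous_const).rpow_const fun _ => Or.inr hα.le

theorem hasDerivAt_posPow_of_ne {α y : ℝ} (hy : y ≠ 0) :
    HasDerivAt (posPow (α + 1)) ((α + 1) * posPow α y) y := by
  rcases hy.lt_or_gt with h | h
  · rw [posPow_of_nonpos α h.le, mul_zero]
    exact (hasDerivAt_const y (0 : ℝ)).congr_of_eventuallyEq
      ((eventually_lt_nhds h).mono fun z hz => posPow_of_nonpos _ hz.le)
  · rw [posPow_of_pos α h]
    have := hasDerivAt_rpow_const (x := y) (p := α + 1) (Or.inl h.ne')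
    rw [add_sub_cancel_right] at this
    exact this.congr_of_eventuallyEq ((eventually_gt_nhds h).mono fun z hz => posPow_of_pos _ hz)

theorem hasDerivAt_posPow {α : ℝ} (hα : 0 < α) (y : ℝ) :
    HasDerivAt (posPow (α + 1)) ((α + 1) * posPow α y) y := by
  rcases eq_or_ne y 0 with rfl | hy
  · exact hasDerivAt_of_hasDerivAt_of_ne (g := fun y => (α + 1) * posPow α y)
      (fun y hy => hasDerivAt_posPow_of_ne hy) (continuous_posPow (by linarith)).continuousAt
      ((continuous_posPow hα).const_mul _).continuousAt
  · exact hasDerivAt_posPow_of_ne hy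

theorem posPow_le_rpow {α y M : ℝ} (hα : 0 ≤ α) (hM : 0 ≤ M) (hy : y ≤ M) :
    posPow α y ≤ M ^ α := by
  unfold posPow
  split_ifs with h
  exacts [rpow_le_rpow h.le hy hα, rpow_nonneg hM _]

theorem antitoneOn_posPow {α : ℝ} (hα : α ≤ 0) : AntitoneOn (posPow α) (Set.Ioi 0) :=
  fun x (hx : 0 < x) y (hy : 0 < y) hxy => by
    rw [posPow_of_pos α hx, posPow_of_pos α hy]
    exact rpow_le_rpow_of_nonpos hx hxy hα

theorem abs_posPow_sub_posPow_le {α : ℝ} (hα₀ : 0 ≤ α) (hα₁ : α ≤ 1) (x y : ℝ) :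
    |posPow α x - posPow α y| ≤ |x - y| ^ α := by
  wlog hyx : y ≤ x generalizing x y
  · rw [abs_sub_comm, abs_sub_comm x]
    exact this y x (le_of_not_ge hyx)
  rw [abs_of_nonneg (sub_nonneg.2 hyx)]
  rcases le_or_gt y 0 with hy | hy
  · rw [posPow_of_nonpos α hy, sub_zero, abs_of_nonneg (posPow_nonneg _ _)]
    exact posPow_le_rpow hα₀ (sub_nonneg.2 hyx) (by linarith)
  · have hmono : y ^ α ≤ x ^ α := rpow_le_rpow hy.le hyx hα₀
    have hadd := rpow_add_le_add_rpow (sub_nonneg.2 hyx) hy.le hα₀ hα₁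
    rw [sub_add_cancel] at hadd
    rw [posPow_of_pos α hy, posPow_of_pos α (hy.trans_le hyx), abs_of_nonneg (sub_nonneg.2 hmono)]
    linarith

/-- The partial derivative in the first variable. -/
def dFst (b : ℝ × ℝ → ℝ) (p : ℝ × ℝ) : ℝ := fderiv ℝ b p (1, 0)

/-- The partial derivative in the second variable. -/
def dSnd (b : ℝ × ℝ → ℝ) (p : ℝ × ℝ) : ℝ := fderiv ℝ b p (0, 1)

/-- Smooth compactly supported amplitudes `b(s, τ)` whose support lies over `τ ∈ U`. Only
`U = Set.univ` and `U = Set.Ioi 0` are used: amplitudes supported in `τ > 0` see the singularity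
of `(τ² - κ)₊^α` as that of a one-sided power, uniformly in `κ`. -/
structure IsAmplitude (U : Set ℝ) (b : ℝ × ℝ → ℝ) : Prop where
  contDiff : ContDiff ℝ ∞ b
  hasCompactSupport : HasCompactSupport b
  tsupport_subset : tsupport b ⊆ Prod.snd ⁻¹' U

namespace IsAmplitude

variable {U : Set ℝ} {b : ℝ × ℝ → ℝ}

protected theorem continuous (hb : IsAmplitude U b) : Continuous b := hb.contDiff.continuous

theorem mul_left (hb : IsAmplitude U b) {f : ℝ × ℝ → ℝ} (hf : ContDiff ℝ ∞ f) :
    IsAmplitude U fun p => f p * b p :=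
  ⟨hf.mul hb.contDiff, hb.hasCompactSupport.mul_left,
    (tsupport_mul_subset_right).trans hb.tsupport_subset⟩

theorem snd_mul (hb : IsAmplitude U b) : IsAmplitude U fun p => p.2 * b p :=
  hb.mul_left contDiff_snd

theorem fderiv_apply (hb : IsAmplitude U b) (v : ℝ × ℝ) : IsAmplitude U fun p => fderiv ℝ b p v :=
  ⟨(hb.contDiff.fderiv_right (m := ∞) (by simp)).clm_apply contDiff_const,
    hb.hasCompactSupport.fderiv_apply ℝ v,
    (tsupport_fderiv_apply_subset ℝ v).trans hb.tsupport_subset⟩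

protected theorem dFst (hb : IsAmplitude U b) : IsAmplitude U (dFst b) := hb.fderiv_apply _

protected theorem dSnd (hb : IsAmplitude U b) : IsAmplitude U (dSnd b) := hb.fderiv_apply _

theorem div_snd (hb : IsAmplitude (Set.Ioi 0) b) : IsAmplitude (Set.Ioi 0) fun p => b p / p.2 := by
  have hsupp : tsupport (fun p : ℝ × ℝ => b p / p.2) ⊆ tsupport b :=
    closure_mono fun p hp hbp => hp (by simp only [hbp, zero_div])
  have hsmooth : ContDiff ℝ ∞ fun p : ℝ × ℝ => b p / p.2 :=
    (contMDiff_of_tsupport fun p hp => (hb.contDiff.contDiffAt.div contDiffAt_snd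
      (hb.tsupport_subset (hsupp hp)).ne').contMDiffAt).contDiff
  exact ⟨hsmooth, hb.hasCompactSupport.mono' ((subset_tsupport _).trans hsupp),
    hsupp.trans hb.tsupport_subset⟩

theorem hasDerivAt_fst (hb : IsAmplitude U b) (s τ : ℝ) :
    HasDerivAt (fun s => b (s, τ)) (dFst b (s, τ)) s :=
  (hb.contDiff.differentiable (by simp) (s, τ)).hasFDerivAt.comp_hasDerivAt s
    ((hasDerivAt_id s).prodMk (hasDerivAt_const s τ))

theorem hasDerivAt_snd (hb : IsAmplitude U b) (s τ : ℝ) :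
    HasDerivAt (fun τ => b (s, τ)) (dSnd b (s, τ)) τ :=
  (hb.contDiff.differentiable (by simp) (s, τ)).hasFDerivAt.comp_hasDerivAt τ
    ((hasDerivAt_const τ s).prodMk (hasDerivAt_id τ))

theorem exists_abs_le (hb : IsAmplitude U b) : ∃ M, ∀ p, |b p| ≤ M :=
  hb.continuous.bounded_above_of_compact_support hb.hasCompactSupport

theorem exists_abs_sub_le (hb : IsAmplitude U b) :
    ∃ L, ∀ s τ τ', |b (s, τ) - b (s, τ')| ≤ L * |τ - τ'| := by
  obtain ⟨L, hL⟩ := hb.dSnd.exists_abs_le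
  exact ⟨L, fun s τ τ' => convex_univ.norm_image_sub_le_of_norm_hasDerivWithin_le
    (fun σ _ => (hb.hasDerivAt_snd s σ).hasDerivWithinAt) (fun σ _ => hL (s, σ))
    (Set.mem_univ τ') (Set.mem_univ τ)⟩

theorem exists_eq_zero_of_le_abs (hb : IsAmplitude U b) :
    ∃ R, 0 < R ∧ ∀ s τ, R ≤ |τ| → b (s, τ) = 0 := by
  obtain ⟨R, hR, h⟩ := hb.hasCompactSupport.exists_pos_le_norm
  exact ⟨R, hR, fun s τ hτ => h _ (hτ.trans (norm_snd_le (s, τ)))⟩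

theorem exists_pos_eq_zero_of_le (hb : IsAmplitude (Set.Ioi 0) b) :
    ∃ a, 0 < a ∧ ∀ s, ∀ τ ≤ a, b (s, τ) = 0 := by
  rcases (tsupport b).eq_empty_or_nonempty with h | h
  · exact ⟨1, one_pos, fun s τ _ => by rw [tsupport_eq_empty_iff.1 h, Pi.zero_apply]⟩
  · obtain ⟨p, hp, hmin⟩ := hb.hasCompactSupport.isCompact.exists_isMinOn h
      continuous_snd.continuousOn
    have hp0 : 0 < p.2 := hb.tsupport_subset hp
    refine ⟨p.2 / 2, half_pos hp0, fun s τ hτ => image_eq_zero_of_notMem_tsupport fun hmem => ?_⟩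
    have : p.2 ≤ τ := hmin hmem
    linarith

end IsAmplitude

/-- The oscillatory integral `∫ e^{2πitτ} b(s, τ) (τ² - κ)₊^α dτ`. -/
def osc (b : ℝ × ℝ → ℝ) (α s κ t : ℝ) : ℂ :=
  ∫ τ : ℝ, (𝐞 (t * τ) : ℂ) * ((b (s, τ) * posPow α (τ ^ 2 - κ) : ℝ) : ℂ)

/-- Absolute convergence of `osc b α` and its decay of order `β` in `t`, locally uniformly in `κ`
and uniformly in `s`. -/
structure HasDecay (b : ℝ × ℝ → ℝ) (α β : ℝ) : Prop where
  integrable : ∀ s κ, Integrable fun τ => b (s, τ) * posPow α (τ ^ 2 - κ)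
  bound : ∀ K, ∃ C, ∀ s κ t, |κ| ≤ K → ‖osc b α s κ t‖ ≤ C * (1 + |t|) ^ (-β)

section Base

variable {U : Set ℝ} {b : ℝ × ℝ → ℝ}

theorem HasDecay.integrable_fourierChar {α β : ℝ} (h : HasDecay b α β) (s κ t : ℝ) :
    Integrable fun τ => (𝐞 (t * τ) : ℂ) * ((b (s, τ) * posPow α (τ ^ 2 - κ) : ℝ) : ℂ) :=
  integrable_fourierChar_mul (by fun_prop) (h.integrable s κ).ofReal

theorem abs_translate_sub_sq_rpow_le {α R τ h : ℝ} (hα : 0 ≤ α) (hτ : |τ| ≤ R)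
    (hh₀ : 0 ≤ h) (hh₁ : h ≤ 1) : |(τ + h) ^ 2 - τ ^ 2| ^ α ≤ ((2 * R + 1) * h) ^ α := by
  have := abs_le.1 hτ
  have : |(τ + h) ^ 2 - τ ^ 2| ≤ (2 * R + 1) * h := by
    rw [show (τ + h) ^ 2 - τ ^ 2 = (2 * τ + h) * h by ring, abs_mul, abs_of_nonneg hh₀]
    gcongr
    exact abs_le.2 ⟨by linarith, by linarith⟩
  gcongr

theorem integral_abs_le_of_eq_zero_of_lt_abs {f : ℝ → ℝ} {r M : ℝ} (hr : 0 ≤ r)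
    (hsupp : ∀ τ, r < |τ| → f τ = 0) (hM : ∀ τ, |τ| ≤ r → |f τ| ≤ M) :
    ∫ τ, |f τ| ≤ 2 * r * M := by
  have h0 : ∀ τ ∉ Set.Icc (-r) r, |f τ| = 0 := fun τ hτ => by
    rw [hsupp τ (not_le.1 fun h => hτ (abs_le.1 h)), abs_zero]
  rw [← setIntegral_eq_integral_of_forall_compl_eq_zero h0]
  have := norm_setIntegral_le_of_norm_le_const (μ := volume) (f := fun τ => |f τ|) (C := M)
    (s := Set.Icc (-r) r) (by simp) fun τ hτ => by
      rw [Real.norm_eq_abs, abs_abs]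
      exact hM τ (abs_le.2 hτ)
  refine (le_abs_self _).trans (this.trans_eq ?_)
  rw [Real.volume_real_Icc_of_le (by linarith)]
  ring

theorem integral_abs_translate_sub_le {g : ℝ → ℝ} {r h : ℝ} (hg : Integrable g) (hg₀ : 0 ≤ g)
    (hzero : ∀ τ ≤ r, g τ = 0) (hanti : AntitoneOn g (Set.Ioi r)) (hh : 0 ≤ h) :
    ∫ τ, |g (τ + h) - g τ| ≤ 2 * ∫ τ in r..r + h, g τ := by
  set G : ℝ → ℝ := (Set.Ioc r (r + h)).indicator g
  have hG : Integrable G := hg.indicator measurableSet_Ioc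
  have hpt : ∀ τ, |g (τ + h) - g τ| ≤ g τ - g (τ + h) + 2 * G (τ + h) := by
    intro τ
    have hG₀ : 0 ≤ G (τ + h) := Set.indicator_nonneg (fun τ _ => hg₀ τ) _
    rcases le_or_gt τ r with hτ | hτ
    · have hGg : G (τ + h) = g (τ + h) := by
        rcases le_or_gt (τ + h) r with h' | h'
        · rw [hzero _ h']
          exact Set.indicator_apply_eq_zero.2 fun _ => hzero _ h'
        · exact Set.indicator_of_mem (Set.mem_Ioc.2 ⟨h', by linarith⟩) _
      rw [hzero τ hτ, sub_zero, abs_of_nonneg (hg₀ _), hGg]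
      linarith
    · have := hanti hτ (hτ.trans_le (le_add_of_nonneg_right hh)) (le_add_of_nonneg_right hh)
      rw [abs_of_nonpos (sub_nonpos.2 this)]
      linarith
  have hgh := hg.comp_add_right h
  have hGh := (hG.comp_add_right h).const_mul 2
  calc ∫ τ, |g (τ + h) - g τ| ≤ ∫ τ, (g τ - g (τ + h) + 2 * G (τ + h)) :=
        integral_mono (hgh.sub hg).abs ((hg.sub hgh).add hGh) hpt
    _ = 2 * ∫ τ in r..r + h, g τ := by
        rw [integral_add (f := fun τ => g τ - g (τ + h)) (hg.sub hgh) hGh, integral_sub hg hgh,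
          integral_const_mul, integral_add_right_eq_self, integral_add_right_eq_self, sub_self,
          zero_add, integral_indicator measurableSet_Ioc,
          intervalIntegral.integral_of_le (by linarith)]

theorem abs_mul_sub_mul_le (x y x' y' : ℝ) :
    |x' * y' - x * y| ≤ |x' - x| * |y'| + |x| * |y' - y| := by
  rw [← abs_mul, ← abs_mul, show x' * y' - x * y = (x' - x) * y' + x * (y' - y) by ring]
  exact abs_add_le _ _

theorem integral_abs_mul_translate_sub_le {b g : ℝ → ℝ} {M L h : ℝ} (hM : ∀ τ, |b τ| ≤ M)
    (hL : ∀ τ τ', |b τ - b τ'| ≤ L * |τ - τ'|) (hg : Integrable g) (hh : 0 ≤ h) :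
    ∫ τ, |b (τ + h) * g (τ + h) - b τ * g τ| ≤
      L * h * (∫ τ, |g τ|) + M * ∫ τ, |g (τ + h) - g τ| := by
  have hgh := hg.comp_add_right h
  have hd : Integrable fun τ => |g (τ + h) - g τ| := (hgh.sub hg).abs
  calc ∫ τ, |b (τ + h) * g (τ + h) - b τ * g τ|
      ≤ ∫ τ, (L * h * |g (τ + h)| + M * |g (τ + h) - g τ|) := by
        refine integral_mono_of_nonneg (Eventually.of_forall fun τ => abs_nonneg _)
          ((hgh.abs.const_mul _).add (hd.const_mul _)) (Eventually.of_forall fun τ => ?_)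
        have hLh := hL (τ + h) τ
        rw [add_sub_cancel_left, abs_of_nonneg hh] at hLh
        refine (abs_mul_sub_mul_le _ _ _ _).trans ?_
        exact add_le_add (mul_le_mul_of_nonneg_right hLh (abs_nonneg _))
          (mul_le_mul_of_nonneg_right (hM τ) (abs_nonneg _))
    _ = L * h * (∫ τ, |g τ|) + M * ∫ τ, |g (τ + h) - g τ| := by
        rw [integral_add (hgh.abs.const_mul _) (hd.const_mul _), integral_const_mul,
          integral_const_mul, integral_add_right_eq_self fun τ => |g τ|]

theorem norm_osc_le_rpow {α β A s κ : ℝ} (hβ : 0 ≤ β)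
    (hint : Integrable fun τ => b (s, τ) * posPow α (τ ^ 2 - κ))
    (hA : ∫ τ, |b (s, τ) * posPow α (τ ^ 2 - κ)| ≤ A)
    (hmod : ∀ h, 0 < h → h ≤ 1 → ∫ τ, |b (s, τ + h) * posPow α ((τ + h) ^ 2 - κ) -
      b (s, τ) * posPow α (τ ^ 2 - κ)| ≤ A * h ^ β) (t : ℝ) :
    ‖osc b α s κ t‖ ≤ 2 ^ β * A * (1 + |t|) ^ (-β) := by
  refine norm_integral_fourierChar_mul_le_rpow hint.ofReal hβ ?_ (fun h h₀ h₁ => ?_) t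
  · simp_rw [RCLike.norm_ofReal]
    exact hA
  · simp_rw [← RCLike.ofReal_sub, RCLike.norm_ofReal]
    exact hmod h h₀ h₁

theorem abs_posPow_sq_sub_le {α R K τ κ : ℝ} (hα : 0 ≤ α) (hτ : |τ| ≤ R) (hκ : |κ| ≤ K) :
    |posPow α (τ ^ 2 - κ)| ≤ (R ^ 2 + K) ^ α := by
  rw [abs_of_nonneg (posPow_nonneg _ _)]
  have hK : 0 ≤ K := (abs_nonneg κ).trans hκ
  exact posPow_le_rpow hα (by positivity)
    (by linarith [sq_le_sq' (abs_le.1 hτ).1 (abs_le.1 hτ).2, neg_abs_le κ])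

theorem IsAmplitude.integrable_mul_posPow (hb : IsAmplitude U b) {α : ℝ} (hα : 0 ≤ α) (s κ : ℝ) :
    Integrable fun τ => b (s, τ) * posPow α (τ ^ 2 - κ) := by
  obtain ⟨M, hM⟩ := hb.exists_abs_le
  obtain ⟨R, -, hR⟩ := hb.exists_eq_zero_of_le_abs
  have hbc := hb.continuous
  have hmeas : Measurable fun τ => b (s, τ) * posPow α (τ ^ 2 - κ) :=
    (hbc.comp (by fun_prop)).measurable.mul ((measurable_posPow α).comp (by fun_prop))
  refine (Measure.integrableOn_of_bounded (s := Set.Icc (-R) R) (M := M * (R ^ 2 + |κ|) ^ α)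
    (by simp) hmeas.aestronglyMeasurable ?_).integrable_of_forall_notMem_eq_zero fun τ hτ => ?_
  · refine (ae_restrict_mem measurableSet_Icc).mono fun τ hτ => ?_
    rw [norm_mul]
    exact mul_le_mul (hM _) (abs_posPow_sq_sub_le hα (abs_le.2 hτ) le_rfl) (norm_nonneg _)
      ((abs_nonneg _).trans (hM 0))
  · rw [hR s τ (not_le.1 fun h => hτ (abs_le.1 h)).le, zero_mul]

theorem abs_mul_posPow_translate_sub_le {f : ℝ → ℝ} {α M L R K κ τ h : ℝ} (hα₀ : 0 ≤ α)
    (hα₁ : α ≤ 1) (hM : ∀ τ, |f τ| ≤ M) (hL₀ : 0 ≤ L) (hL : ∀ τ τ', |f τ - f τ'| ≤ L * |τ - τ'|)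
    (hτ : |τ| ≤ R) (hκ : |κ| ≤ K) (h₀ : 0 < h) (h₁ : h ≤ 1) :
    |f (τ + h) * posPow α ((τ + h) ^ 2 - κ) - f τ * posPow α (τ ^ 2 - κ)| ≤
      (L * ((R + 1) ^ 2 + K) ^ α + M * (2 * R + 1) ^ α) * h ^ α := by
  have hM₀ : 0 ≤ M := (abs_nonneg _).trans (hM 0)
  have hR₀ : 0 ≤ R := (abs_nonneg τ).trans hτ
  have hτh : |τ + h| ≤ R + 1 := (abs_add_le τ h).trans (by rw [abs_of_pos h₀]; linarith)
  have hLh := hL (τ + h) τ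
  rw [add_sub_cancel_left, abs_of_pos h₀] at hLh
  have hhα : h ≤ h ^ α := by simpa using rpow_le_rpow_of_exponent_ge h₀ h₁ hα₁
  have hpow := abs_posPow_sub_posPow_le hα₀ hα₁ ((τ + h) ^ 2 - κ) (τ ^ 2 - κ)
  rw [sub_sub_sub_cancel_right] at hpow
  replace hpow := hpow.trans (abs_translate_sub_sq_rpow_le hα₀ hτ h₀.le h₁)
  rw [mul_rpow (by positivity) h₀.le] at hpow
  calc _ ≤ _ := abs_mul_sub_mul_le _ _ _ _
    _ ≤ L * h ^ α * ((R + 1) ^ 2 + K) ^ α + M * ((2 * R + 1) ^ α * h ^ α) :=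
      add_le_add (mul_le_mul (hLh.trans (by gcongr)) (abs_posPow_sq_sub_le hα₀ hτh hκ)
        (abs_nonneg _) (by positivity)) (mul_le_mul (hM _) hpow (abs_nonneg _) hM₀)
    _ = _ := by ring

theorem IsAmplitude.exists_holder_bound (hb : IsAmplitude U b) {α : ℝ} (hα₀ : 0 ≤ α)
    (hα₁ : α ≤ 1) (K : ℝ) : ∃ A, ∀ s κ τ h, |κ| ≤ K → 0 < h → h ≤ 1 →
      |b (s, τ) * posPow α (τ ^ 2 - κ)| ≤ A ∧
      |b (s, τ + h) * posPow α ((τ + h) ^ 2 - κ) - b (s, τ) * posPow α (τ ^ 2 - κ)| ≤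
        A * h ^ α := by
  obtain ⟨M, hM⟩ := hb.exists_abs_le
  obtain ⟨L, hL⟩ := hb.exists_abs_sub_le
  obtain ⟨R, hR₀, hR⟩ := hb.exists_eq_zero_of_le_abs
  have hM₀ : 0 ≤ M := (abs_nonneg _).trans (hM 0)
  have hL₀ : 0 ≤ L := by simpa using (abs_nonneg _).trans (hL 0 1 0)
  set P := ((R + 1) ^ 2 + |K|) ^ α
  set D := L * ((R + 1 + 1) ^ 2 + |K|) ^ α + M * (2 * (R + 1) + 1) ^ α
  have hP : 0 ≤ M * P := by positivity
  have hD : 0 ≤ D := by positivity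
  refine ⟨M * P + D, fun s κ τ h hκ h₀ h₁ => ?_⟩
  rcases lt_or_ge (R + 1) |τ| with hτ | hτ
  · have hτh : R ≤ |τ + h| := by
      have := abs_sub_abs_le_abs_sub τ (-h)
      rw [sub_neg_eq_add, abs_neg, abs_of_pos h₀] at this
      linarith
    rw [hR s τ (by linarith), hR s (τ + h) hτh, zero_mul, zero_mul, sub_zero, abs_zero]
    exact ⟨by positivity, by positivity⟩
  have hκ' : |κ| ≤ |K| := hκ.trans (le_abs_self K)
  constructor
  · rw [abs_mul]
    exact (mul_le_mul (hM _) (abs_posPow_sq_sub_le hα₀ hτ hκ') (abs_nonneg _) hM₀).trans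
      (le_add_of_nonneg_right hD)
  · exact (abs_mul_posPow_translate_sub_le hα₀ hα₁ (fun τ => hM (s, τ)) hL₀ (hL s) hτ hκ' h₀
      h₁).trans (mul_le_mul_of_nonneg_right (le_add_of_nonneg_left hP) (by positivity))

theorem IsAmplitude.hasDecay_of_le_one (hb : IsAmplitude U b) {α : ℝ} (hα₀ : 0 ≤ α)
    (hα₁ : α ≤ 1) : HasDecay b α α where
  integrable := hb.integrable_mul_posPow hα₀
  bound K := by
    obtain ⟨R, hR₀, hR⟩ := hb.exists_eq_zero_of_le_abs
    obtain ⟨A, hA⟩ := hb.exists_holder_bound hα₀ hα₁ K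
    refine ⟨2 ^ α * (2 * (R + 1) * A), fun s κ t hκ => norm_osc_le_rpow hα₀
      (hb.integrable_mul_posPow hα₀ s κ) ?_ (fun h h₀ h₁ => ?_) t⟩
    · exact integral_abs_le_of_eq_zero_of_lt_abs (by positivity)
        (fun τ hτ => by rw [hR s τ (by linarith), zero_mul])
        fun τ _ => (hA s κ τ 1 hκ one_pos le_rfl).1
    · rw [mul_assoc]
      refine integral_abs_le_of_eq_zero_of_lt_abs (by positivity) (fun τ hτ => ?_)
        fun τ _ => (hA s κ τ h hκ h₀ h₁).2
      have := abs_sub_abs_le_abs_sub τ (-h)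
      rw [sub_neg_eq_add, abs_neg, abs_of_pos h₀] at this
      rw [hR s τ (by linarith), hR s (τ + h) (by linarith), zero_mul, zero_mul, sub_zero]

theorem posPow_sq_sub_le_of_lt {α a r κ τ : ℝ} (hα : α ≤ 0) (ha : 0 < a) (har : a ≤ r)
    (hκ : κ ≤ r ^ 2) (hτ : r < τ) : posPow α (τ ^ 2 - κ) ≤ a ^ α * (τ - r) ^ α := by
  have h : a * (τ - r) ≤ τ ^ 2 - κ := by nlinarith
  have h₀ : 0 < a * (τ - r) := mul_pos ha (sub_pos.2 hτ)
  rw [posPow_of_pos _ (h₀.trans_le h), ← mul_rpow ha.le (sub_pos.2 hτ).le]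
  exact rpow_le_rpow_of_nonpos h₀ h hα

theorem integral_sub_rpow {α : ℝ} (hα : -1 < α) (r h : ℝ) :
    ∫ τ in r..r + h, (τ - r) ^ α = h ^ (α + 1) / (α + 1) := by
  rw [intervalIntegral.integral_comp_sub_right (fun τ => τ ^ α), sub_self, add_sub_cancel_left,
    integral_rpow (Or.inl hα), zero_rpow (by linarith), sub_zero]

/-- The power `(τ² - κ)₊^α` cut off to `r < τ ≤ R`. When `r` is positive and `κ ≤ r²` it is, for
`α ≤ 0`, a decreasing function of `τ > r` with a singularity no worse than that of `(τ - r)₊^α`. -/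
def truncatedPow (α κ r R : ℝ) : ℝ → ℝ :=
  (Set.Ioc r R).indicator fun τ => posPow α (τ ^ 2 - κ)

section TruncatedPower

variable {α a r R κ : ℝ}

theorem truncatedPow_nonneg (α κ r R : ℝ) : 0 ≤ truncatedPow α κ r R :=
  Set.indicator_nonneg fun _ _ => posPow_nonneg _ _

theorem antitoneOn_truncatedPow (hα : α ≤ 0) (hr : 0 < r) (hκ : κ ≤ r ^ 2) (R : ℝ) :
    AntitoneOn (truncatedPow α κ r R) (Set.Ioi r) := by
  intro τ (hτ : r < τ) τ' _ hle
  unfold truncatedPow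
  by_cases hR : τ' ≤ R
  · rw [Set.indicator_of_mem (show τ ∈ Set.Ioc r R from ⟨hτ, hle.trans hR⟩),
      Set.indicator_of_mem (show τ' ∈ Set.Ioc r R from ⟨hτ.trans_le hle, hR⟩)]
    exact antitoneOn_posPow hα (show 0 < τ ^ 2 - κ by nlinarith)
      (show 0 < τ' ^ 2 - κ by nlinarith) (by nlinarith)
  · rw [Set.indicator_of_notMem (fun h => hR h.2)]
    exact truncatedPow_nonneg α κ r R τ

theorem integrable_truncatedPow (hα₀ : α ≤ 0) (hα₁ : -1 < α) (hr : 0 < r) (hκ : κ ≤ r ^ 2)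
    (R : ℝ) : Integrable (truncatedPow α κ r R) := by
  rw [truncatedPow, integrable_indicator_iff measurableSet_Ioc]
  have hpow : IntegrableOn (fun τ => r ^ α * (τ - r) ^ α) (Set.Ioc r R) := by
    have := (intervalIntegral.intervalIntegrable_rpow' hα₁ (a := 0) (b := R - r)).comp_sub_right r
    rw [zero_add, sub_add_cancel] at this
    exact this.1.const_mul _
  refine hpow.mono' ((measurable_posPow α).comp (by fun_prop)).aestronglyMeasurable
    ((ae_restrict_mem measurableSet_Ioc).mono fun τ hτ => ?_)
  rw [norm_of_nonneg (posPow_nonneg _ _)]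
  exact posPow_sq_sub_le_of_lt hα₀ hr le_rfl hκ hτ.1

theorem intervalIntegral_truncatedPow_le (hα₀ : α ≤ 0) (hα₁ : -1 < α) (ha : 0 < a) (har : a ≤ r)
    (hκ : κ ≤ r ^ 2) (R : ℝ) {h : ℝ} (hh : 0 ≤ h) :
    ∫ τ in r..r + h, truncatedPow α κ r R τ ≤ a ^ α / (α + 1) * h ^ (α + 1) := by
  have hpow : IntervalIntegrable (fun τ => a ^ α * (τ - r) ^ α) volume r (r + h) := by
    have := (intervalIntegral.intervalIntegrable_rpow' hα₁ (a := 0) (b := h)).comp_sub_right r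
    rw [zero_add, add_comm h] at this
    exact this.const_mul _
  calc _ ≤ ∫ τ in r..r + h, a ^ α * (τ - r) ^ α := by
        refine intervalIntegral.integral_mono_on_of_le_Ioo (by linarith)
          (integrable_truncatedPow hα₀ hα₁ (ha.trans_le har) hκ R).intervalIntegrable hpow
          fun τ hτ => ?_
        exact Set.indicator_apply_le' (fun _ => posPow_sq_sub_le_of_lt hα₀ ha har hκ hτ.1)
          fun _ => by have := sub_pos.2 hτ.1; positivity
    _ = a ^ α / (α + 1) * h ^ (α + 1) := by
        rw [intervalIntegral.integral_const_mul, integral_sub_rpow hα₁]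
        ring

theorem integral_abs_truncatedPow_le (hα₀ : α ≤ 0) (hα₁ : -1 < α) (ha : 0 < a) (har : a ≤ r)
    (hκ : κ ≤ r ^ 2) (hR : 0 ≤ R) :
    ∫ τ, |truncatedPow α κ r R τ| ≤ a ^ α / (α + 1) * R ^ (α + 1) := by
  refine Eq.trans_le ?_ (intervalIntegral_truncatedPow_le hα₀ hα₁ ha har hκ R hR)
  rw [intervalIntegral.integral_of_le (by linarith),
    setIntegral_eq_integral_of_forall_compl_eq_zero]
  · exact integral_congr_ae (Eventually.of_forall fun τ => abs_of_nonneg (truncatedPow_nonneg ..))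
  · intro τ hτ
    exact Set.indicator_of_notMem (fun h => hτ ⟨h.1, h.2.trans (by linarith)⟩) _

theorem integral_abs_translate_truncatedPow_sub_le (hα₀ : α ≤ 0) (hα₁ : -1 < α) (ha : 0 < a)
    (har : a ≤ r) (hκ : κ ≤ r ^ 2) (R : ℝ) {h : ℝ} (hh : 0 ≤ h) :
    ∫ τ, |truncatedPow α κ r R (τ + h) - truncatedPow α κ r R τ| ≤
      2 * (a ^ α / (α + 1) * h ^ (α + 1)) := by
  have hr := ha.trans_le har
  refine (integral_abs_translate_sub_le (r := r) (integrable_truncatedPow hα₀ hα₁ hr hκ R)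
    (truncatedPow_nonneg α κ r R)
    (fun τ hτ => Set.indicator_of_notMem (fun h => hτ.not_gt h.1) _)
    (antitoneOn_truncatedPow hα₀ hr hκ R) hh).trans ?_
  gcongr
  exact intervalIntegral_truncatedPow_le hα₀ hα₁ ha har hκ R hh

end TruncatedPower

section MulPosPow

variable {f : ℝ → ℝ} {α a M R : ℝ}

theorem le_max_sqrt_sq (ha : 0 ≤ a) (κ : ℝ) : κ ≤ max √κ a ^ 2 :=
  (sqrt_le_left (ha.trans (le_max_right _ _))).1 (le_max_left _ _)

theorem mul_posPow_eq_mul_truncatedPow (ha : 0 < a) (hfa : ∀ τ ≤ a, f τ = 0)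
    (hfR : ∀ τ, R ≤ |τ| → f τ = 0) (κ τ : ℝ) :
    f τ * posPow α (τ ^ 2 - κ) = f τ * truncatedPow α κ (max √κ a) R τ := by
  unfold truncatedPow
  by_cases hτ : τ ∈ Set.Ioc (max √κ a) R
  · rw [Set.indicator_of_mem hτ]
  rw [Set.indicator_of_notMem hτ, mul_zero, mul_eq_zero]
  rcases le_or_gt τ a with h | h
  · exact Or.inl (hfa τ h)
  rcases lt_or_ge R τ with h' | h'
  · exact Or.inl (hfR τ (h'.le.trans (le_abs_self τ)))
  · have hsqrt : τ ≤ √κ := not_lt.1 fun hlt => hτ ⟨max_lt hlt h, h'⟩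
    exact Or.inr (posPow_of_nonpos _ (sub_nonpos.2 ((le_sqrt' (ha.trans h)).1 hsqrt)))

theorem integrable_mul_posPow_of_nonpos (hα₁ : -1 < α) (hα₀ : α ≤ 0) (ha : 0 < a)
    (hM : ∀ τ, |f τ| ≤ M) (hfa : ∀ τ ≤ a, f τ = 0) (hfR : ∀ τ, R ≤ |τ| → f τ = 0)
    (hf : Continuous f) (κ : ℝ) : Integrable fun τ => f τ * posPow α (τ ^ 2 - κ) := by
  simp only [mul_posPow_eq_mul_truncatedPow ha hfa hfR κ]
  exact (integrable_truncatedPow hα₀ hα₁ (ha.trans_le (le_max_right _ _))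
    (le_max_sqrt_sq ha.le κ) R).bdd_mul hf.aestronglyMeasurable (Eventually.of_forall hM)

theorem integral_abs_mul_posPow_le (hα₁ : -1 < α) (hα₀ : α ≤ 0) (ha : 0 < a)
    (hM : ∀ τ, |f τ| ≤ M) (hfa : ∀ τ ≤ a, f τ = 0) (hfR : ∀ τ, R ≤ |τ| → f τ = 0)
    (hR : 0 ≤ R) (κ : ℝ) :
    ∫ τ, |f τ * posPow α (τ ^ 2 - κ)| ≤ M * (a ^ α / (α + 1) * R ^ (α + 1)) := by
  have hM₀ : 0 ≤ M := (abs_nonneg _).trans (hM 0)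
  have hκ := le_max_sqrt_sq ha.le κ
  have har : a ≤ max √κ a := le_max_right _ _
  simp only [mul_posPow_eq_mul_truncatedPow ha hfa hfR κ, abs_mul]
  refine (integral_mono_of_nonneg (Eventually.of_forall fun _ => by positivity)
    ((integrable_truncatedPow hα₀ hα₁ (ha.trans_le har) hκ R).abs.const_mul M)
    (Eventually.of_forall fun τ => mul_le_mul_of_nonneg_right (hM _) (abs_nonneg _))).trans ?_
  rw [integral_const_mul]
  exact mul_le_mul_of_nonneg_left (integral_abs_truncatedPow_le hα₀ hα₁ ha har hκ hR) hM₀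

theorem integral_abs_translate_mul_posPow_sub_le (hα₁ : -1 < α) (hα₀ : α ≤ 0) (ha : 0 < a)
    (hM : ∀ τ, |f τ| ≤ M) (hfa : ∀ τ ≤ a, f τ = 0) (hfR : ∀ τ, R ≤ |τ| → f τ = 0)
    (hR : 0 ≤ R) {L : ℝ} (hL₀ : 0 ≤ L) (hL : ∀ τ τ', |f τ - f τ'| ≤ L * |τ - τ'|) (κ : ℝ) {h : ℝ}
    (h₀ : 0 < h) (h₁ : h ≤ 1) :
    ∫ τ, |f (τ + h) * posPow α ((τ + h) ^ 2 - κ) - f τ * posPow α (τ ^ 2 - κ)| ≤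
      (L * (a ^ α / (α + 1) * R ^ (α + 1)) + M * (2 * (a ^ α / (α + 1)))) * h ^ (α + 1) := by
  have hM₀ : 0 ≤ M := (abs_nonneg _).trans (hM 0)
  have hκ := le_max_sqrt_sq ha.le κ
  have har : a ≤ max √κ a := le_max_right _ _
  have : 0 ≤ a ^ α / (α + 1) := div_nonneg (rpow_nonneg ha.le _) (by linarith)
  have hh : h ≤ h ^ (α + 1) := by
    simpa using rpow_le_rpow_of_exponent_ge h₀ h₁ (show α + 1 ≤ 1 by linarith)
  simp only [mul_posPow_eq_mul_truncatedPow ha hfa hfR κ]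
  refine (integral_abs_mul_translate_sub_le hM hL
    (integrable_truncatedPow hα₀ hα₁ (ha.trans_le har) hκ R) h₀.le).trans ?_
  calc _ ≤ L * h ^ (α + 1) * (a ^ α / (α + 1) * R ^ (α + 1)) +
        M * (2 * (a ^ α / (α + 1) * h ^ (α + 1))) := by
        gcongr
        · exact integral_abs_truncatedPow_le hα₀ hα₁ ha har hκ hR
        · exact integral_abs_translate_truncatedPow_sub_le hα₀ hα₁ ha har hκ R h₀.le
    _ = _ := by ring

end MulPosPow

theorem IsAmplitude.hasDecay_of_nonpos (hb : IsAmplitude (Set.Ioi 0) b) {α : ℝ} (hα₁ : -1 < α)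
    (hα₀ : α ≤ 0) : HasDecay b α (α + 1) := by
  obtain ⟨M, hM⟩ := hb.exists_abs_le
  obtain ⟨L, hL⟩ := hb.exists_abs_sub_le
  obtain ⟨R, hR, hbR⟩ := hb.exists_eq_zero_of_le_abs
  obtain ⟨a, ha, hba⟩ := hb.exists_pos_eq_zero_of_le
  have hM₀ : 0 ≤ M := (abs_nonneg _).trans (hM 0)
  have hL₀ : 0 ≤ L := by simpa using (abs_nonneg _).trans (hL 0 1 0)
  have hα : 0 < α + 1 := by linarith
  have hint (s κ : ℝ) : Integrable fun τ => b (s, τ) * posPow α (τ ^ 2 - κ) :=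
    integrable_mul_posPow_of_nonpos hα₁ hα₀ ha (fun τ => hM (s, τ)) (hba s) (hbR s)
      (hb.continuous.comp (by fun_prop)) κ
  set V := a ^ α / (α + 1)
  refine ⟨hint, fun K => ⟨2 ^ (α + 1) * (M * (V * R ^ (α + 1)) +
    (L * (V * R ^ (α + 1)) + M * (2 * V))), fun s κ t _ =>
    norm_osc_le_rpow hα.le (hint s κ) ?_ (fun h h₀ h₁ => ?_) t⟩⟩
  · exact (integral_abs_mul_posPow_le hα₁ hα₀ ha (fun τ => hM (s, τ)) (hba s) (hbR s) hR.le
      κ).trans (le_add_of_nonneg_right (by positivity))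
  · exact (integral_abs_translate_mul_posPow_sub_le hα₁ hα₀ ha (fun τ => hM (s, τ)) (hba s)
      (hbR s) hR.le hL₀ (hL s) κ h₀ h₁).trans
      (mul_le_mul_of_nonneg_right (le_add_of_nonneg_left (by positivity)) (by positivity))

end Base

section Recurrence

variable {U : Set ℝ} {b : ℝ × ℝ → ℝ} {α β : ℝ}

theorem IsAmplitude.hasCompactSupport_mul_posPow (hb : IsAmplitude U b) (α s κ : ℝ) :
    HasCompactSupport fun τ => ((b (s, τ) * posPow α (τ ^ 2 - κ) : ℝ) : ℂ) := by
  obtain ⟨R, -, hR⟩ := hb.exists_eq_zero_of_le_abs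
  refine HasCompactSupport.intro (isCompact_Icc (a := -R) (b := R)) fun τ hτ => ?_
  rw [hR s τ (not_le.1 fun h => hτ (abs_le.1 h)).le, zero_mul, Complex.ofReal_zero]

theorem IsAmplitude.osc_dSnd_add (hb : IsAmplitude U b) (hα : -1 < α) {s κ : ℝ}
    (hint : Integrable fun τ => τ * b (s, τ) * posPow α (τ ^ 2 - κ)) (t : ℝ) :
    osc (dSnd b) (α + 1) s κ t + 2 * (α + 1) * osc (fun p => p.2 * b p) α s κ t =
      -(2 * π * Complex.I * t * osc b (α + 1) s κ t) := by
  have hα' : 0 < α + 1 := by linarith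
  set S : Set ℝ := {τ | τ ^ 2 = κ}
  have hS : S.Countable := (Set.toFinite {√κ, -√κ}).countable.mono fun τ (hτ : τ ^ 2 = κ) => by
    rw [Set.mem_insert_iff, Set.mem_singleton_iff, ← sq_eq_sq_iff_eq_or_eq_neg,
      sq_sqrt (hτ ▸ sq_nonneg τ), hτ]
  set f : ℝ → ℂ := fun τ => ((b (s, τ) * posPow (α + 1) (τ ^ 2 - κ) : ℝ) : ℂ)
  have hf : Continuous f := Complex.continuous_ofReal.comp
    ((hb.continuous.comp (by fun_prop)).mul ((continuous_posPow hα').comp (by fun_prop)))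
  set g₁ : ℝ → ℂ := fun τ => ((dSnd b (s, τ) * posPow (α + 1) (τ ^ 2 - κ) : ℝ) : ℂ)
  set g₂ : ℝ → ℂ := fun τ => ((τ * b (s, τ) * posPow α (τ ^ 2 - κ) : ℝ) : ℂ)
  have hg₁ : Integrable g₁ := (hb.dSnd.integrable_mul_posPow hα'.le s κ).ofReal
  have hg₂ : Integrable g₂ := hint.ofReal
  have hderiv : ∀ τ ∉ S, HasDerivAt f (g₁ τ + 2 * (α + 1) * g₂ τ) τ := fun τ hτ => by
    have hsq := ((hasDerivAt_pow 2 τ).sub_const κ)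
    have := ((hb.hasDerivAt_snd s τ).mul
      ((hasDerivAt_posPow_of_ne (α := α) (sub_ne_zero.2 hτ)).comp τ hsq)).ofReal_comp
    refine this.congr_deriv ?_
    simp only [g₁, g₂, Function.comp]
    push_cast
    ring
  rw [osc, osc, osc, ← integral_fourierChar_mul_deriv hf (hb.hasCompactSupport_mul_posPow _ s κ)
    hS hderiv (hg₁.add (hg₂.const_mul _)) t, ← integral_const_mul, ← integral_add]
  · refine integral_congr_ae (Eventually.of_forall fun τ => ?_)
    simp only [g₁, g₂]
    ring
  · exact integrable_fourierChar_mul (by fun_prop) hg₁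
  · exact (integrable_fourierChar_mul (by fun_prop) hg₂).const_mul _

theorem osc_add_one {s κ : ℝ} (hint : Integrable fun τ => b (s, τ) * posPow α (τ ^ 2 - κ))
    (hint' : Integrable fun τ => τ * (τ * b (s, τ)) * posPow α (τ ^ 2 - κ)) (t : ℝ) :
    osc b (α + 1) s κ t = osc (fun p => p.2 * (p.2 * b p)) α s κ t - κ * osc b α s κ t := by
  rw [osc, osc, osc, ← integral_const_mul, ← integral_sub]
  · refine integral_congr_ae (Eventually.of_forall fun τ => ?_)
    simp only [posPow_add_one]
    push_cast
    ring
  · exact integrable_fourierChar_mul (by fun_prop) hint'.ofReal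
  · exact (integrable_fourierChar_mul (by fun_prop) hint.ofReal).const_mul _

theorem hasDecay_add_one_of_hasDecay (hα : -1 < α)
    (h : ∀ b, IsAmplitude U b → HasDecay b α β) (hb : IsAmplitude U b) :
    HasDecay b (α + 1) β where
  integrable := hb.integrable_mul_posPow (by linarith)
  bound K := by
    obtain ⟨C₀, hC₀⟩ := (h b hb).bound K
    obtain ⟨C₂, hC₂⟩ := (h _ hb.snd_mul.snd_mul).bound K
    refine ⟨C₂ + K * C₀, fun s κ t hκ => ?_⟩
    rw [osc_add_one ((h b hb).integrable s κ) ((h _ hb.snd_mul.snd_mul).integrable s κ)]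
    calc _ ≤ ‖osc (fun p => p.2 * (p.2 * b p)) α s κ t‖ + |κ| * ‖osc b α s κ t‖ :=
          (norm_sub_le _ _).trans_eq (by rw [norm_mul, Complex.norm_real, Real.norm_eq_abs])
      _ ≤ C₂ * (1 + |t|) ^ (-β) + K * (C₀ * (1 + |t|) ^ (-β)) :=
          add_le_add (hC₂ s κ t hκ) (mul_le_mul hκ (hC₀ s κ t hκ) (norm_nonneg _)
            ((abs_nonneg κ).trans hκ))
      _ = _ := by ring

theorem norm_two_pi_I_mul (t : ℝ) : ‖(2 * π * Complex.I * t : ℂ)‖ = 2 * π * |t| := by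
  simp only [norm_mul, Complex.norm_real, Complex.norm_I, Complex.norm_ofNat, norm_eq_abs,
    abs_of_pos pi_pos, mul_one]

theorem norm_le_one_add_abs_rpow_of_mul_le {z : ℂ} {A B t : ℝ} (h₀ : ‖z‖ ≤ A * (1 + |t|) ^ (-β))
    (h₁ : ‖2 * π * Complex.I * t * z‖ ≤ B * (1 + |t|) ^ (-β)) :
    ‖z‖ ≤ (A + B) * (1 + |t|) ^ (-(β + 1)) := by
  have hT : 0 < 1 + |t| := by positivity
  have h₂ : |t| * ‖z‖ ≤ ‖2 * π * Complex.I * t * z‖ := by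
    rw [norm_mul, norm_two_pi_I_mul, mul_assoc (2 * π)]
    exact le_mul_of_one_le_left (by positivity) (by linarith [pi_gt_three])
  rw [neg_add, ← sub_eq_add_neg, rpow_sub_one hT.ne', mul_div_assoc', le_div_iff₀ hT]
  linarith

theorem hasDecay_add_one (hα : -1 < α) (h : ∀ b, IsAmplitude U b → HasDecay b α β)
    (hb : IsAmplitude U b) : HasDecay b (α + 1) (β + 1) where
  integrable := hb.integrable_mul_posPow (by linarith)
  bound K := by
    have hα' : 0 ≤ α + 1 := by linarith
    obtain ⟨A, hA⟩ := (hasDecay_add_one_of_hasDecay hα h hb).bound K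
    obtain ⟨B₁, hB₁⟩ := (hasDecay_add_one_of_hasDecay hα h hb.dSnd).bound K
    obtain ⟨B₂, hB₂⟩ := (h _ hb.snd_mul).bound K
    refine ⟨A + (B₁ + 2 * (α + 1) * B₂), fun s κ t hκ =>
      norm_le_one_add_abs_rpow_of_mul_le (hA s κ t hκ) ?_⟩
    rw [← norm_neg, ← hb.osc_dSnd_add hα ((h _ hb.snd_mul).integrable s κ)]
    have hnorm : ‖(2 * (α + 1) : ℂ)‖ = 2 * (α + 1) := by
      exact_mod_cast Complex.norm_of_nonneg (mul_nonneg zero_le_two hα')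
    calc _ ≤ ‖osc (dSnd b) (α + 1) s κ t‖ +
          2 * (α + 1) * ‖osc (fun p => p.2 * b p) α s κ t‖ :=
          (norm_add_le _ _).trans_eq (by rw [norm_mul, hnorm])
      _ ≤ B₁ * (1 + |t|) ^ (-β) + 2 * (α + 1) * (B₂ * (1 + |t|) ^ (-β)) := by
          gcongr
          exacts [hB₁ s κ t hκ, hB₂ s κ t hκ]
      _ = _ := by ring

theorem hasDecay_add_natCast (hα : -1 < α) (h : ∀ b, IsAmplitude U b → HasDecay b α β) (n : ℕ) :
    ∀ b, IsAmplitude U b → HasDecay b (α + n) (β + n) := by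
  induction n with
  | zero => simpa using h
  | succ n ih =>
    push_cast
    simp only [← add_assoc]
    exact fun b hb => hasDecay_add_one (by linarith [n.cast_nonneg (α := ℝ)]) ih hb

theorem IsAmplitude.hasDecay (hb : IsAmplitude U b) (hα : 0 ≤ α) : HasDecay b α α := by
  have h : ∀ b, IsAmplitude U b → HasDecay b (Int.fract α) (Int.fract α) := fun b hb =>
    hb.hasDecay_of_le_one (Int.fract_nonneg α) (Int.fract_lt_one α).le
  have := hasDecay_add_natCast (by linarith [Int.fract_nonneg α]) h ⌊α⌋₊ b hb
  rwa [natCast_floor_eq_intCast_floor hα, Int.fract_add_floor] at this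

theorem IsAmplitude.hasDecay_of_pos (hb : IsAmplitude (Set.Ioi 0) b) (hα : -1 < α) :
    HasDecay b α (α + 1) := by
  have hlt : α - 1 < ⌈α⌉₊ ∧ (⌈α⌉₊ : ℝ) < α + 1 := by
    refine ⟨by linarith [Nat.le_ceil α], ?_⟩
    rcases le_or_gt α 0 with h | h
    · rw [Nat.ceil_eq_zero.2 h, Nat.cast_zero]
      linarith
    · exact Nat.ceil_lt_add_one h.le
  have h : ∀ b, IsAmplitude (Set.Ioi 0) b → HasDecay b (α - ⌈α⌉₊) (α - ⌈α⌉₊ + 1) :=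
    fun b hb => hb.hasDecay_of_nonpos (by linarith) (by linarith [Nat.le_ceil α])
  have := hasDecay_add_natCast (by linarith) h ⌈α⌉₊ b hb
  rwa [sub_add_cancel, add_right_comm, sub_add_cancel] at this

/-- The recurrence read backwards: a gain of one order in `t` is traded for a smaller power. -/
theorem IsAmplitude.osc_eq (hb : IsAmplitude (Set.Ioi 0) b) (hα : -1 < α) (s κ t : ℝ) :
    osc b α s κ t = -(osc (dSnd fun p => b p / p.2) (α + 1) s κ t +
      2 * π * Complex.I * t * osc (fun p => b p / p.2) (α + 1) s κ t) / (2 * (α + 1)) := by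
  have hne : (2 * (α + 1) : ℂ) ≠ 0 := by
    exact_mod_cast (by linarith : 0 < 2 * (α + 1)).ne'
  obtain ⟨a, ha, hba⟩ := hb.exists_pos_eq_zero_of_le
  have hmul : (fun p : ℝ × ℝ => p.2 * (b p / p.2)) = b := by
    ext ⟨s, τ⟩
    rcases eq_or_ne τ 0 with rfl | hτ
    · simp only [zero_mul, hba s 0 ha.le]
    · exact mul_div_cancel₀ _ hτ
  have hint := (hb.hasDecay_of_pos hα).integrable s κ
  have := hb.div_snd.osc_dSnd_add hα (s := s) (κ := κ) (by
    simpa only [congr_fun hmul (s, _)] using hint) t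
  rw [hmul] at this
  rw [eq_div_iff hne]
  linear_combination this

end Recurrence

section SecondDifference

theorem hasDerivAt_integral_of_continuous {E : Type*} [NormedAddCommGroup E] [NormedSpace ℝ E]
    {F F' : ℝ → ℝ → E} {R : ℝ} (hF : ∀ s, Continuous (F s))
    (hF' : Continuous (Function.uncurry F'))
    (hderiv : ∀ s τ, HasDerivAt (fun s => F s τ) (F' s τ) s)
    (hzero : ∀ s τ, R ≤ |τ| → F s τ = 0) (s₀ : ℝ) :
    HasDerivAt (fun s => ∫ τ, F s τ) (∫ τ, F' s₀ τ) s₀ := by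
  have hnot {τ : ℝ} (hτ : τ ∉ Set.Icc (-R) R) : R ≤ |τ| :=
    (not_le.1 fun h => hτ (abs_le.1 h)).le
  have hzero' : ∀ s, ∀ τ ∉ Set.Icc (-R) R, F' s τ = 0 := fun s τ hτ =>
    (hderiv s τ).unique ((hasDerivAt_const s (0 : E)).congr_of_eventuallyEq
      (Eventually.of_forall fun s => hzero s τ (hnot hτ)))
  obtain ⟨C, hC⟩ := ((isCompact_closedBall s₀ 1).prod isCompact_Icc).exists_bound_of_continuousOn
    (hF'.continuousOn (s := Metric.closedBall s₀ 1 ×ˢ Set.Icc (-R) R))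
  refine (hasDerivAt_integral_of_dominated_loc_of_deriv_le
    (bound := (Set.Icc (-R) R).indicator fun _ => C) (Metric.ball_mem_nhds s₀ one_pos)
    (Eventually.of_forall fun s => (hF s).aestronglyMeasurable)
    ((hF s₀).integrable_of_hasCompactSupport
      (HasCompactSupport.intro isCompact_Icc fun τ hτ => hzero s₀ τ (hnot hτ)))
    (hF'.comp (.prodMk_right s₀)).aestronglyMeasurable
    (Eventually.of_forall fun τ s hs => ?_)
    ((integrable_indicator_iff measurableSet_Icc).2 (by simp))
    (Eventually.of_forall fun τ s _ => hderiv s τ)).2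
  by_cases hτ : τ ∈ Set.Icc (-R) R
  · rw [Set.indicator_of_mem hτ]
    exact hC (s, τ) ⟨Metric.ball_subset_closedBall hs, hτ⟩
  · rw [Set.indicator_of_notMem hτ, hzero' s τ hτ, norm_zero]

theorem norm_second_difference_le {E : Type*} [NormedAddCommGroup E] [NormedSpace ℝ E]
    {f f₁ f₂ : ℝ → E} {B s : ℝ} (h₁ : ∀ x, |x| ≤ |s| → HasDerivAt f (f₁ x) x)
    (h₂ : ∀ x, |x| ≤ |s| → HasDerivAt f₁ (f₂ x) x) (hB : ∀ x, |x| ≤ |s| → ‖f₂ x‖ ≤ B) :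
    ‖f s + f (-s) - (2 : ℝ) • f 0‖ ≤ 2 * B * s ^ 2 := by
  have hB₀ : 0 ≤ B := (norm_nonneg _).trans (hB s le_rfl)
  have hconv : Convex ℝ {x : ℝ | |x| ≤ |s|} := by
    have : {x : ℝ | |x| ≤ |s|} = Set.Icc (-|s|) |s| :=
      Set.ext fun x => abs_le (a := x)
    exact this ▸ convex_Icc _ _
  have hodd : ∀ x, |x| ≤ |s| → ‖f₁ x - f₁ (-x)‖ ≤ 2 * B * |s| := by
    intro x hx
    have := hconv.norm_image_sub_le_of_norm_hasDerivWithin_le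
      (fun y hy => (h₂ y hy).hasDerivWithinAt) hB (show |-x| ≤ |s| by rwa [abs_neg]) hx
    rw [sub_neg_eq_add, ← two_mul, norm_mul, norm_ofNat, norm_eq_abs] at this
    nlinarith
  have hsymm : ∀ x, |x| ≤ |s| → HasDerivAt (fun x => f x + f (-x)) (f₁ x - f₁ (-x)) x := by
    intro x hx
    refine ((h₁ x hx).add ((h₁ (-x) (by rwa [abs_neg])).scomp x (hasDerivAt_neg x))).congr_deriv ?_
    rw [neg_one_smul, sub_eq_add_neg]
  have := hconv.norm_image_sub_le_of_norm_hasDerivWithin_le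
    (fun x hx => (hsymm x hx).hasDerivWithinAt) hodd
    (show |0| ≤ |s| by simp) (show |s| ≤ |s| from le_rfl)
  simpa only [neg_zero, sub_zero, ← two_smul ℝ (f 0), norm_eq_abs, mul_assoc, ← sq, sq_abs]
    using this

variable {U : Set ℝ} {b : ℝ × ℝ → ℝ} {α γ : ℝ}

theorem IsAmplitude.hasDerivAt_osc (hb : IsAmplitude U b) (hα : 0 < α) (u t s : ℝ) :
    HasDerivAt (fun s => osc b (α + 1) s (u ^ 2 - s) t)
      (osc (dFst b) (α + 1) s (u ^ 2 - s) t + (α + 1) * osc b α s (u ^ 2 - s) t) s := by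
  obtain ⟨R, -, hR⟩ := hb.exists_eq_zero_of_le_abs
  have hp₁ := continuous_posPow (show 0 < α + 1 by linarith)
  have hp := continuous_posPow hα
  set F₁ : ℝ → ℝ → ℝ := fun s τ => dFst b (s, τ) * posPow (α + 1) (τ ^ 2 - (u ^ 2 - s))
  set F₂ : ℝ → ℝ → ℝ := fun s τ => b (s, τ) * posPow α (τ ^ 2 - (u ^ 2 - s))
  have hb₁c := hb.dFst.continuous
  have hbc := hb.continuous
  have hderiv : ∀ s τ, HasDerivAt
      (fun s => (𝐞 (t * τ) : ℂ) * ((b (s, τ) * posPow (α + 1) (τ ^ 2 - (u ^ 2 - s)) : ℝ) : ℂ))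
      (𝐞 (t * τ) * F₁ s τ + (α + 1) * (𝐞 (t * τ) * F₂ s τ)) s := fun s τ => by
    have hlin : HasDerivAt (fun s => τ ^ 2 - (u ^ 2 - s)) 1 s := by
      simpa using ((hasDerivAt_id s).const_sub (u ^ 2)).const_sub (τ ^ 2)
    refine ((((hb.hasDerivAt_fst s τ).mul
      ((hasDerivAt_posPow hα _).comp s hlin)).ofReal_comp).const_mul _).congr_deriv ?_
    simp only [F₁, F₂, Function.comp]
    push_cast
    ring
  refine (hasDerivAt_integral_of_continuous (R := R) (fun s => by fun_prop) ?_ hderiv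
    (fun s τ hτ => by rw [hR s τ hτ, zero_mul, Complex.ofReal_zero, mul_zero]) s).congr_deriv ?_
  · simp only [F₁, F₂, Function.uncurry_def]
    fun_prop
  · rw [osc, osc, integral_add, integral_const_mul]
    · exact (hb.dFst.hasDecay (by linarith)).integrable_fourierChar s _ t
    · exact ((hb.hasDecay hα.le).integrable_fourierChar s _ t).const_mul _

/-- The bound `O(s² (1 + |t|)^γ)`, uniform for bounded `u`, on the symmetric second difference at
`0` of `s ↦ ∫ e^{2πitτ} b(s, τ) (τ² - u² + s)₊^α dτ`. -/
def HasSecondDifferenceBound (b : ℝ × ℝ → ℝ) (α γ : ℝ) : Prop :=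
  ∀ K, ∃ C, ∀ u t s, |u| ≤ K → |s| ≤ 1 →
    ‖osc b α s (u ^ 2 - s) t + osc b α (-s) (u ^ 2 - -s) t - 2 * osc b α 0 (u ^ 2 - 0) t‖ ≤
      C * s ^ 2 * (1 + |t|) ^ γ

theorem abs_sq_sub_le {u s K : ℝ} (hu : |u| ≤ K) (hs : |s| ≤ 1) : |u ^ 2 - s| ≤ K ^ 2 + 1 := by
  have : u ^ 2 ≤ K ^ 2 := sq_le_sq' (abs_le.1 hu).1 (abs_le.1 hu).2
  exact (abs_sub _ _).trans (by rw [abs_of_nonneg (sq_nonneg u)]; linarith)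

theorem HasDecay.exists_norm_osc_le (h : HasDecay b α (α + 1)) {β : ℝ} (hβ : β ≤ α + 1) (K : ℝ) :
    ∃ C, ∀ u t s, |u| ≤ K → |s| ≤ 1 → ‖osc b α s (u ^ 2 - s) t‖ ≤ C * (1 + |t|) ^ (-β) := by
  obtain ⟨C, hC⟩ := h.bound (K ^ 2 + 1)
  refine ⟨max C 0, fun u t s hu hs => (hC s _ t (abs_sq_sub_le hu hs)).trans ?_⟩
  gcongr
  · exact le_max_left _ _
  · linarith [abs_nonneg t]

theorem IsAmplitude.hasSecondDifferenceBound_add_three (hb : IsAmplitude (Set.Ioi 0) b)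
    (hα : -1 < α) : HasSecondDifferenceBound b (α + 1 + 1 + 1) (-(α + 2)) := by
  intro K
  obtain ⟨C₀, hC₀⟩ := (hb.dFst.dFst.hasDecay_of_pos
    (show -1 < α + 1 + 1 + 1 by linarith)).exists_norm_osc_le (show α + 2 ≤ _ by linarith) K
  obtain ⟨C₁, hC₁⟩ := (hb.dFst.hasDecay_of_pos
    (show -1 < α + 1 + 1 by linarith)).exists_norm_osc_le (show α + 2 ≤ _ by linarith) K
  obtain ⟨C₂, hC₂⟩ := (hb.hasDecay_of_pos
    (show -1 < α + 1 by linarith)).exists_norm_osc_le (show α + 2 ≤ _ by linarith) K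
  refine ⟨2 * (C₀ + 2 * (α + 3) * C₁ + (α + 3) * (α + 2) * C₂), fun u t s hu hs => ?_⟩
  have hd (x : ℝ) := hb.hasDerivAt_osc (show 0 < α + 1 + 1 by linarith) u t x
  have hd' (x : ℝ) := (hb.dFst.hasDerivAt_osc (show 0 < α + 1 + 1 by linarith) u t x).add
    ((hb.hasDerivAt_osc (show 0 < α + 1 by linarith) u t x).const_mul
      ((α + 1 + 1 : ℝ) + 1 : ℂ))
  have hn₁ : ‖((α + 1 + 1 : ℝ) + 1 : ℂ)‖ = α + 3 := by
    rw [show ((α + 1 + 1 : ℝ) + 1 : ℂ) = (α + 3 : ℝ) by push_cast; ring]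
    exact Complex.norm_of_nonneg (by linarith)
  have hn₂ : ‖((α + 1 : ℝ) + 1 : ℂ)‖ = α + 2 := by
    rw [show ((α + 1 : ℝ) + 1 : ℂ) = (α + 2 : ℝ) by push_cast; ring]
    exact Complex.norm_of_nonneg (by linarith)
  have hα₂ : 0 ≤ α + 2 := by linarith
  have hα₃ : 0 ≤ α + 3 := by linarith
  set T := (1 + |t|) ^ (-(α + 2))
  have := norm_second_difference_le (s := s) (B := C₀ * T + (α + 3) * (C₁ * T) +
    (α + 3) * (C₁ * T + (α + 2) * (C₂ * T))) (fun x _ => hd x) (fun x _ => hd' x) fun x hx => by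
    have hx₁ := hx.trans hs
    refine (norm_add_le_of_le (norm_add_le _ _) (norm_mul_le_of_le le_rfl
      (norm_add_le _ _))).trans ?_
    rw [norm_mul, norm_mul, hn₁, hn₂]
    gcongr
    exacts [hC₀ u t x hu hx₁, hC₁ u t x hu hx₁, hC₁ u t x hu hx₁, hC₂ u t x hu hx₁]
  rw [Complex.real_smul, Complex.ofReal_ofNat] at this
  exact this.trans_eq (by ring)

theorem hasSecondDifferenceBound_of_add_one (hα : -1 < α)
    (h : ∀ b, IsAmplitude (Set.Ioi 0) b → HasSecondDifferenceBound b (α + 1) γ)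
    (hb : IsAmplitude (Set.Ioi 0) b) : HasSecondDifferenceBound b α (γ + 1) := by
  intro K
  obtain ⟨A, hA⟩ := h _ hb.div_snd.dSnd K
  obtain ⟨B, hB⟩ := h _ hb.div_snd K
  have hα' : 0 < 2 * (α + 1) := by linarith
  refine ⟨(|A| + 2 * π * |B|) / (2 * (α + 1)), fun u t s hu hs => ?_⟩
  have hT : 0 < 1 + |t| := by positivity
  set Δ : (ℝ × ℝ → ℝ) → ℝ → ℂ := fun b α => osc b α s (u ^ 2 - s) t +
    osc b α (-s) (u ^ 2 - -s) t - 2 * osc b α 0 (u ^ 2 - 0) t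
  have hΔ : Δ b α = -(Δ (dSnd fun p => b p / p.2) (α + 1) +
      2 * π * Complex.I * t * Δ (fun p => b p / p.2) (α + 1)) / ((2 * (α + 1) : ℝ) : ℂ) := by
    simp only [Δ, hb.osc_eq hα]
    push_cast
    ring
  have hnum : ‖Δ (dSnd fun p => b p / p.2) (α + 1) +
      2 * π * Complex.I * t * Δ (fun p => b p / p.2) (α + 1)‖ ≤
      |A| * s ^ 2 * (1 + |t|) ^ (γ + 1) + 2 * π * |t| * (|B| * s ^ 2 * (1 + |t|) ^ γ) := by
    refine (norm_add_le _ _).trans ?_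
    rw [norm_mul, norm_two_pi_I_mul]
    gcongr
    · refine (hA u t s hu hs).trans ?_
      gcongr
      exacts [le_abs_self A, by linarith [abs_nonneg t], by linarith]
    · refine (hB u t s hu hs).trans ?_
      gcongr
      exact le_abs_self B
  calc ‖Δ b α‖ ≤ (|A| * s ^ 2 * (1 + |t|) ^ (γ + 1) +
        2 * π * |t| * (|B| * s ^ 2 * (1 + |t|) ^ γ)) / (2 * (α + 1)) := by
        rw [hΔ, norm_div, norm_neg, Complex.norm_of_nonneg hα'.le]
        gcongr
    _ ≤ (|A| * s ^ 2 * (1 + |t|) ^ (γ + 1) +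
        2 * π * (1 + |t|) * (|B| * s ^ 2 * (1 + |t|) ^ γ)) / (2 * (α + 1)) := by
        gcongr
        linarith
    _ = _ := by
        rw [rpow_add_one hT.ne']
        ring

theorem IsAmplitude.hasSecondDifferenceBound (hb : IsAmplitude (Set.Ioi 0) b) (hα : -1 < α) :
    HasSecondDifferenceBound b α (1 - α) := by
  rw [show 1 - α = -(α + 2) + 1 + 1 + 1 by ring]
  exact hasSecondDifferenceBound_of_add_one hα
    (fun _ => hasSecondDifferenceBound_of_add_one (by linarith)
      (fun _ => hasSecondDifferenceBound_of_add_one (by linarith)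
        (fun _ h => h.hasSecondDifferenceBound_add_three hα))) hb

end SecondDifference

section AreaFormula

theorem measure_le_of_locally_le {X : Type*} [TopologicalSpace X] [SecondCountableTopology X]
    [MeasurableSpace X] [OpensMeasurableSpace X] {μ ν : Measure X} {U : Set X}
    (h : ∀ x ∈ U, ∃ N ∈ 𝓝 x, ∀ A ⊆ N, MeasurableSet A → A ⊆ U → μ A ≤ ν A)
    {A : Set X} (hA : MeasurableSet A) (hAU : A ⊆ U) : μ A ≤ ν A := by
  choose! N hN hNle using h
  obtain ⟨t, htU, htc, hcov⟩ := TopologicalSpace.countable_cover_nhdsWithin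
    (s := U) (f := fun x => interior (N x))
    (fun x hx => mem_nhdsWithin_of_mem_nhds (interior_mem_nhds.2 (hN x hx)))
  rcases t.eq_empty_or_nonempty with rfl | hne
  · rw [Set.biUnion_empty] at hcov
    rw [Set.subset_empty_iff.1 (hAU.trans hcov), measure_empty]
    exact zero_le
  obtain ⟨u, rfl⟩ := htc.exists_eq_range hne
  set D : ℕ → Set X := disjointed fun n => interior (N (u n))
  have hDm : ∀ n, MeasurableSet (D n) :=
    MeasurableSet.disjointed fun n => isOpen_interior.measurableSet
  have hAeq : A = ⋃ n, A ∩ D n := by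
    rw [← Set.inter_iUnion, iUnion_disjointed]
    exact (Set.inter_eq_left.2 (hAU.trans (hcov.trans_eq Set.biUnion_range))).symm
  have hdisj : Pairwise (Function.onFun Disjoint fun n => A ∩ D n) := fun i j hij =>
    (disjoint_disjointed _ hij).mono Set.inter_subset_right Set.inter_subset_right
  rw [hAeq, measure_iUnion hdisj fun n => hA.inter (hDm n),
    measure_iUnion hdisj fun n => hA.inter (hDm n)]
  refine ENNReal.tsum_le_tsum fun n => hNle (u n) (htU ⟨n, rfl⟩) _ ?_ (hA.inter (hDm n)) ?_
  · exact Set.inter_subset_right.trans ((disjointed_subset _ n).trans interior_subset)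
  · exact Set.inter_subset_left.trans hAU

theorem le_of_forall_one_lt_le_pow_mul {c d : ℝ≥0∞} (k : ℕ)
    (h : ∀ K : ℝ≥0, 1 < K → d ≤ (K : ℝ≥0∞) ^ k * c) : d ≤ c := by
  have hlim : Tendsto (fun K : ℝ≥0 => (K : ℝ≥0∞) ^ k * c) (𝓝[>] 1) (𝓝 (1 * c)) := by
    refine ENNReal.Tendsto.mul_const ?_ (Or.inl one_ne_zero)
    have : ContinuousAt (fun K : ℝ≥0 => (K : ℝ≥0∞) ^ k) 1 :=
      ((ENNReal.continuous_pow k).comp ENNReal.continuous_coe).continuousAt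
    simpa only [ContinuousAt, ENNReal.coe_one, one_pow] using
      this.tendsto.mono_left nhdsWithin_le_nhds
  rw [one_mul] at hlim
  exact ge_of_tendsto hlim (eventually_mem_nhdsWithin.mono fun K hK => h K hK)

theorem measure_eq_of_locally_le_mul {X : Type*} [TopologicalSpace X] [SecondCountableTopology X]
    [MeasurableSpace X] [OpensMeasurableSpace X] {μ ν : Measure X} {U : Set X} (k : ℕ)
    (h : ∀ K : ℝ≥0, 1 < K → ∀ x ∈ U, ∃ N ∈ 𝓝 x, ∀ A ⊆ N, MeasurableSet A → A ⊆ U →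
      μ A ≤ (K : ℝ≥0∞) ^ k * ν A ∧ ν A ≤ (K : ℝ≥0∞) ^ k * μ A)
    {A : Set X} (hA : MeasurableSet A) (hAU : A ⊆ U) : μ A = ν A := by
  refine le_antisymm (le_of_forall_one_lt_le_pow_mul k fun K hK => ?_)
    (le_of_forall_one_lt_le_pow_mul k fun K hK => ?_)
  · refine measure_le_of_locally_le (ν := (K : ℝ≥0∞) ^ k • ν) (fun x hx => ?_) hA hAU
    obtain ⟨N, hN, hle⟩ := h K hK x hx
    exact ⟨N, hN, fun A hA hAm hAU => (hle A hA hAm hAU).1⟩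
  · refine measure_le_of_locally_le (ν := (K : ℝ≥0∞) ^ k • μ) (fun x hx => ?_) hA hAU
    obtain ⟨N, hN, hle⟩ := h K hK x hx
    exact ⟨N, hN, fun A hA hAm hAU => (hle A hA hAm hAU).2⟩

theorem hausdorffMeasure_image_le_mul {X Y Z : Type*} [MetricSpace Y] [MeasurableSpace Y]
    [BorelSpace Y] [MetricSpace Z] [MeasurableSpace Z] [BorelSpace Z] {f : X → Y} {g : X → Z}
    {A : Set X} {K : ℝ≥0} (h : ∀ x ∈ A, ∀ y ∈ A, dist (f x) (f y) ≤ K * dist (g x) (g y))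
    {d : ℝ} (hd : 0 ≤ d) : μH[d] (f '' A) ≤ (K : ℝ≥0∞) ^ d * μH[d] (g '' A) := by
  rcases A.eq_empty_or_nonempty with rfl | ⟨x₀, -⟩
  · simp only [Set.image_empty, measure_empty, mul_zero, le_refl]
  have : Nonempty X := ⟨x₀⟩
  have hmem (x : X) (hx : x ∈ A) : Function.invFunOn g A (g x) ∈ A :=
    Function.invFunOn_mem ⟨x, hx, rfl⟩
  have heq (x : X) (hx : x ∈ A) : g (Function.invFunOn g A (g x)) = g x :=
    Function.invFunOn_eq ⟨x, hx, rfl⟩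
  have himg : f '' A = (f ∘ Function.invFunOn g A) '' (g '' A) := by
    rw [Set.image_image]
    refine Set.image_congr fun x hx => dist_le_zero.1 ?_
    simpa only [Function.comp_apply, heq x hx, dist_self, mul_zero] using h x hx _ (hmem x hx)
  have hlip : LipschitzOnWith K (f ∘ Function.invFunOn g A) (g '' A) := by
    refine LipschitzOnWith.of_dist_le_mul ?_
    rintro _ ⟨x, hx, rfl⟩ _ ⟨y, hy, rfl⟩
    simpa only [Function.comp_apply, heq x hx, heq y hy] using h _ (hmem x hx) _ (hmem y hy)
  rw [himg]
  exact hlip.hausdorffMeasure_image_le hd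

theorem exists_nhds_norm_sub_le_mul {E F G : Type*} [NormedAddCommGroup E] [NormedSpace ℝ E]
    [NormedAddCommGroup F] [NormedSpace ℝ F] [NormedAddCommGroup G] [NormedSpace ℝ G] {Φ : E → F}
    {x : E} {T : E →L[ℝ] F} {L : E ≃L[ℝ] G} (hΦ : HasStrictFDerivAt Φ T x)
    (hTL : ∀ v, ‖T v‖ = ‖L v‖) {K : ℝ} (hK : 1 < K) :
    ∃ N ∈ 𝓝 x, ∀ y ∈ N, ∀ z ∈ N,
      ‖Φ y - Φ z‖ ≤ K * ‖L y - L z‖ ∧ ‖L y - L z‖ ≤ K * ‖Φ y - Φ z‖ := by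
  have hK₀ : 0 < K := zero_lt_one.trans hK
  set M : ℝ := ‖(L.symm : G →L[ℝ] E)‖ + 1
  have hM : 0 < M := by positivity
  have hLM (v : E) : ‖v‖ ≤ M * ‖L v‖ :=
    calc ‖v‖ = ‖L.symm (L v)‖ := by rw [L.symm_apply_apply]
      _ ≤ ‖(L.symm : G →L[ℝ] E)‖ * ‖L v‖ := (L.symm : G →L[ℝ] E).le_opNorm _
      _ ≤ M * ‖L v‖ := by gcongr; exact (lt_add_one _).le
  have hinv : K⁻¹ < 1 := inv_lt_one_of_one_lt₀ hK
  obtain ⟨N, hN, hNe⟩ := Filter.eventually_prod_self_iff'.1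
    ((nhds_prod_eq (x := x) (y := x)) ▸ hΦ.isLittleO.def (c := (1 - K⁻¹) / M)
      (div_pos (sub_pos.2 hinv) hM))
  refine ⟨N, hN, fun y hy z hz => ?_⟩
  have hlin : |‖Φ y - Φ z‖ - ‖L y - L z‖| ≤ (1 - K⁻¹) * ‖L y - L z‖ :=
    calc _ ≤ ‖Φ y - Φ z - T (y - z)‖ := by
          rw [← map_sub L, ← hTL]
          exact abs_norm_sub_norm_le _ _
      _ ≤ (1 - K⁻¹) / M * (M * ‖L (y - z)‖) := (hNe y hy z hz).trans <|
          mul_le_mul_of_nonneg_left (hLM _) (div_pos (sub_pos.2 hinv) hM).le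
      _ = _ := by rw [map_sub]; field_simp
  have hsum : 2 - K⁻¹ ≤ K := by
    have := two_mul_le_add_sq 1 K
    rw [sub_le_iff_le_add, ← sub_nonneg]
    have : K + K⁻¹ - 2 = (K - 1) ^ 2 * K⁻¹ := by field_simp; ring
    rw [this]
    positivity
  obtain ⟨hlo, hup⟩ := abs_le.1 hlin
  constructor
  · nlinarith [norm_nonneg (L y - L z)]
  · rw [← inv_mul_le_iff₀ hK₀]
    linarith

section

variable {E F : Type*} [NormedAddCommGroup E] [NormedSpace ℝ E] [FiniteDimensional ℝ E]
  [MeasurableSpace E] [BorelSpace E] [NormedAddCommGroup F] [NormedSpace ℝ F]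
  [MeasurableSpace F] [BorelSpace F]

open Module

theorem exists_nhds_hausdorffMeasure_image_le {Φ : E → F} {x : E} {T : E →L[ℝ] F} {L : E ≃L[ℝ] E}
    (hΦ : HasStrictFDerivAt Φ T x) (hTL : ∀ v, ‖T v‖ = ‖L v‖) {K : ℝ≥0} (hK : 1 < K) :
    ∃ N ∈ 𝓝 x, ∀ A ⊆ N,
      μH[finrank ℝ E] (Φ '' A) ≤ (K : ℝ≥0∞) ^ finrank ℝ E *
        (ENNReal.ofReal |LinearMap.det (L : E →ₗ[ℝ] E)| * μH[finrank ℝ E] A) ∧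
      ENNReal.ofReal |LinearMap.det (L : E →ₗ[ℝ] E)| * μH[finrank ℝ E] A ≤
        (K : ℝ≥0∞) ^ finrank ℝ E * μH[finrank ℝ E] (Φ '' A) := by
  obtain ⟨N, hN, h⟩ := exists_nhds_norm_sub_le_mul hΦ hTL (K := K) (by exact_mod_cast hK)
  simp only [← dist_eq_norm] at h
  refine ⟨N, hN, fun A hA => ?_⟩
  rw [← show μH[finrank ℝ E] (L '' A) = _ from Measure.addHaar_image_continuousLinearEquiv _ L A]
  simp only [← ENNReal.rpow_natCast]
  exact ⟨hausdorffMeasure_image_le_mul (fun y hy z hz => (h y (hA hy) z (hA hz)).1) (by positivity),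
    hausdorffMeasure_image_le_mul (fun y hy z hz => (h y (hA hy) z (hA hz)).2) (by positivity)⟩

theorem exists_nhds_setLIntegral_le_mul {X : Type*} [TopologicalSpace X] [MeasurableSpace X]
    (μ : Measure X) {J : X → ℝ} {x : X} (hJ : ContinuousAt J x) (hJx : 0 < J x) {K : ℝ≥0}
    (hK : 1 < K) : ∃ N ∈ 𝓝 x, ∀ A ⊆ N, MeasurableSet A →
      ∫⁻ y in A, ENNReal.ofReal (J y) ∂μ ≤ K * (ENNReal.ofReal (J x) * μ A) ∧
      ENNReal.ofReal (J x) * μ A ≤ K * ∫⁻ y in A, ENNReal.ofReal (J y) ∂μ := by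
  have hK' : (1 : ℝ) < K := by exact_mod_cast hK
  have hup : ∀ᶠ y in 𝓝 x, J y < K * J x :=
    hJ.eventually_lt_const (lt_mul_of_one_lt_left hJx hK')
  have hlow : ∀ᶠ y in 𝓝 x, J x < K * J y :=
    (hJ.const_mul (K : ℝ)).eventually_const_lt (lt_mul_of_one_lt_left hJx hK')
  refine ⟨_, hup.and hlow, fun A hA hAm => ⟨?_, ?_⟩⟩
  · rw [← mul_assoc, ← setLIntegral_const]
    refine setLIntegral_mono' hAm fun y hy => ?_
    rw [← ENNReal.ofReal_coe_nnreal, ← ENNReal.ofReal_mul (by positivity)]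
    exact ENNReal.ofReal_le_ofReal (hA hy).1.le
  · rw [← lintegral_const_mul' _ _ ENNReal.coe_ne_top, ← setLIntegral_const]
    refine setLIntegral_mono' hAm fun y hy => ?_
    rw [← ENNReal.ofReal_coe_nnreal, ← ENNReal.ofReal_mul (by positivity)]
    exact ENNReal.ofReal_le_ofReal (hA hy).2.le

theorem map_restrict_image_apply {X Y : Type*} [MeasurableSpace X] [MeasurableSpace Y]
    (μ : Measure Y) {Φ : X → Y} {P : Y → X} (hP : ∀ x, P (Φ x) = x) (hPm : Measurable P)
    (U : Set X) {A : Set X} (hA : MeasurableSet A) :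
    (μ.restrict (Φ '' U)).map P A = μ (Φ '' (A ∩ U)) := by
  rw [Measure.map_apply hPm hA, Measure.restrict_apply (hPm hA)]
  congr 1
  ext y
  constructor
  · rintro ⟨hy, x, hx, rfl⟩
    exact ⟨x, ⟨by rwa [Set.mem_preimage, hP] at hy, hx⟩, rfl⟩
  · rintro ⟨x, ⟨hxA, hxU⟩, rfl⟩
    exact ⟨by rwa [Set.mem_preimage, hP], x, hxU, rfl⟩

/-- The derivative of `Φ` enters only through the norm it induces: `J x` is the modulus of the
determinant of any automorphism of `E` inducing the same norm. -/
theorem map_hausdorffMeasure_restrict_image {Φ : E → F} {P : F → E} {U : Set E} {J : E → ℝ}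
    (hU : IsOpen U) (hP : ∀ y, P (Φ y) = y) (hPm : Measurable P)
    (hJ : ∀ x ∈ U, ContinuousAt J x)
    (hΦ : ∀ x ∈ U, ∃ (T : E →L[ℝ] F) (L : E ≃L[ℝ] E), HasStrictFDerivAt Φ T x ∧
      (∀ v, ‖T v‖ = ‖L v‖) ∧ |LinearMap.det (L : E →ₗ[ℝ] E)| = J x) :
    (μH[finrank ℝ E].restrict (Φ '' U)).map P =
      (μH[finrank ℝ E].restrict U).withDensity fun x => ENNReal.ofReal (J x) := by
  set κ : Measure E := μH[finrank ℝ E]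
  rw [← restrict_withDensity hU.measurableSet]
  ext A hA
  have himage : ((μH[finrank ℝ E].restrict (Φ '' U)).map P) A =
      ((μH[finrank ℝ E].restrict (Φ '' U)).map P) (A ∩ U) := by
    rw [map_restrict_image_apply _ hP hPm U hA,
      map_restrict_image_apply _ hP hPm U (hA.inter hU.measurableSet), Set.inter_assoc,
      Set.inter_self]
  rw [Measure.restrict_apply hA, himage]
  refine measure_eq_of_locally_le_mul (finrank ℝ E + 1) (U := U) (fun K hK x hx => ?_)
    (hA.inter hU.measurableSet) Set.inter_subset_right
  obtain ⟨T, L, hT, hTL, hdet⟩ := hΦ x hx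
  have hJx : 0 < J x := by
    rw [← hdet, abs_pos]
    exact (LinearEquiv.isUnit_det' L.toLinearEquiv).ne_zero
  obtain ⟨N, hN, hNle⟩ := exists_nhds_hausdorffMeasure_image_le hT hTL hK
  obtain ⟨N', hN', hNle'⟩ := exists_nhds_setLIntegral_le_mul κ (hJ x hx) hJx hK
  refine ⟨N ∩ N', inter_mem hN hN', fun B hB hBm hBU => ?_⟩
  obtain ⟨hle, hge⟩ := hNle B (hB.trans Set.inter_subset_left)
  obtain ⟨hle', hge'⟩ := hNle' B (hB.trans Set.inter_subset_right) hBm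
  rw [hdet] at hle hge
  rw [map_restrict_image_apply _ hP hPm U hBm, Set.inter_eq_left.2 hBU, withDensity_apply _ hBm]
  constructor
  · calc _ ≤ _ := hle
      _ ≤ (K : ℝ≥0∞) ^ finrank ℝ E * (K * ∫⁻ y in B, ENNReal.ofReal (J y) ∂κ) := by gcongr
      _ = _ := by ring
  · calc _ ≤ _ := hle'
      _ ≤ K * ((K : ℝ≥0∞) ^ finrank ℝ E * μH[finrank ℝ E] (Φ '' B)) := by gcongr
      _ = _ := by ring

end

end AreaFormula

section LevelSets

variable {m : ℕ}

/-- The spatial part `ξ` of a point `z = (ξ, τ)`. -/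
def space (z : Spacetime m) : EuclideanSpace ℝ (Fin m) :=
  WithLp.toLp 2 fun i => z i.castSucc

@[simp] theorem embed_castSucc (ξ : EuclideanSpace ℝ (Fin m)) (t : ℝ) (i : Fin m) :
    embed ξ t i.castSucc = ξ i := by
  simp [embed]

@[simp] theorem embed_last (ξ : EuclideanSpace ℝ (Fin m)) (t : ℝ) :
    embed ξ t (Fin.last m) = t := by
  simp [embed]

@[simp] theorem timeCoord_embed (ξ : EuclideanSpace ℝ (Fin m)) (t : ℝ) :
    timeCoord (embed ξ t) = t := embed_last ξ t

@[simp] theorem space_embed (ξ : EuclideanSpace ℝ (Fin m)) (t : ℝ) : space (embed ξ t) = ξ := by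
  ext i; simp [space]

@[simp] theorem embed_space (z : Spacetime m) : embed (space z) (timeCoord z) = z := by
  ext i
  induction i using Fin.lastCases with
  | last => simp [timeCoord]
  | cast i => simp [space]

theorem measurable_space : Measurable (space : Spacetime m → _) := by
  unfold space
  fun_prop

theorem continuous_timeCoord : Continuous (timeCoord : Spacetime m → ℝ) := by
  unfold timeCoord
  fun_prop

theorem continuous_waveSymbol : Continuous (waveSymbol : Spacetime m → ℝ) :=
  (continuous_norm.pow 2).sub (continuous_const.mul (continuous_timeCoord.pow 2))

theorem inner_embed (ξ : EuclideanSpace ℝ (Fin m)) (t : ℝ) (w : Spacetime m) :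
    ⟪embed ξ t, w⟫ = ⟪ξ, space w⟫ + t * timeCoord w := by
  simp [PiLp.inner_apply, Fin.sum_univ_castSucc, space, timeCoord, mul_comm]

theorem norm_sq_embed (ξ : EuclideanSpace ℝ (Fin m)) (t : ℝ) :
    ‖embed ξ t‖ ^ 2 = ‖ξ‖ ^ 2 + t ^ 2 := by
  simp [EuclideanSpace.norm_sq_eq, Fin.sum_univ_castSucc]

theorem waveSymbol_embed (ξ : EuclideanSpace ℝ (Fin m)) (t : ℝ) :
    waveSymbol (embed ξ t) = ‖ξ‖ ^ 2 - t ^ 2 := by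
  rw [waveSymbol, norm_sq_embed, timeCoord_embed]
  ring

/-- `embed` as a continuous linear map on `ℝᵐ × ℝ`. -/
def embedCLM (m : ℕ) : (EuclideanSpace ℝ (Fin m) × ℝ) →L[ℝ] Spacetime m :=
  LinearMap.toContinuousLinearMap
    { toFun := fun p => embed p.1 p.2
      map_add' := fun p q => by
        ext i
        induction i using Fin.lastCases <;> simp
      map_smul' := fun c p => by
        ext i
        induction i using Fin.lastCases <;> simp }

@[simp] theorem embedCLM_apply (p : EuclideanSpace ℝ (Fin m) × ℝ) :
    embedCLM m p = embed p.1 p.2 := rfl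

theorem isometry_embed_zero : Isometry fun ξ : EuclideanSpace ℝ (Fin m) => embed ξ 0 := by
  refine Isometry.of_dist_eq fun ξ ξ' => ?_
  have hsub : embed ξ 0 - embed ξ' 0 = embed (ξ - ξ') (0 : ℝ) := by
    simpa using ((embedCLM m).map_sub (ξ, 0) (ξ', 0)).symm
  rw [dist_eq_norm, dist_eq_norm, hsub, ← sq_eq_sq₀ (norm_nonneg _) (norm_nonneg _),
    norm_sq_embed, zero_pow two_ne_zero, add_zero]

/-- The sheet `τ = σ √(|ξ|² - s)`, where `σ = ±1`, of the level set `g⁻¹(s)`, as a graph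
over `ξ`. -/
def sheet (σ s : ℝ) (ξ : EuclideanSpace ℝ (Fin m)) : Spacetime m :=
  embed ξ (σ * √(‖ξ‖ ^ 2 - s))

/-- The domain over which the two sheets of `g⁻¹(s)` are graphs, away from `τ = 0`. -/
def sheetDomain (m : ℕ) (s : ℝ) : Set (EuclideanSpace ℝ (Fin m)) := {ξ | s < ‖ξ‖ ^ 2}

/-- The surface area density of a sheet of `g⁻¹(s)` with respect to `ξ`. -/
def sheetJacobian (s : ℝ) (ξ : EuclideanSpace ℝ (Fin m)) : ℝ :=
  √(1 + ‖ξ‖ ^ 2 / (‖ξ‖ ^ 2 - s))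

theorem isOpen_sheetDomain (s : ℝ) : IsOpen (sheetDomain m s) :=
  isOpen_lt continuous_const (by fun_prop)

theorem continuous_sheet (σ s : ℝ) : Continuous (sheet σ s : _ → Spacetime m) :=
  (embedCLM m).continuous.comp (by fun_prop : Continuous fun ξ : EuclideanSpace ℝ (Fin m) =>
    (ξ, σ * √(‖ξ‖ ^ 2 - s)))

theorem measurable_sheetJacobian (s : ℝ) :
    Measurable (sheetJacobian s : EuclideanSpace ℝ (Fin m) → ℝ) := by
  unfold sheetJacobian
  fun_prop

@[simp] theorem space_sheet (σ s : ℝ) (ξ : EuclideanSpace ℝ (Fin m)) :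
    space (sheet σ s ξ) = ξ := space_embed _ _

theorem image_sheet {σ : ℝ} (hσ : σ ^ 2 = 1) (s : ℝ) :
    sheet σ s '' sheetDomain m s = {z | waveSymbol z = s ∧ 0 < σ * timeCoord z} := by
  ext z
  constructor
  · rintro ⟨ξ, hξ, rfl⟩
    have hpos : 0 < ‖ξ‖ ^ 2 - s := sub_pos.2 hξ
    simp only [sheet, Set.mem_ofPred_eq, waveSymbol_embed, timeCoord_embed, mul_pow, hσ,
      Real.sq_sqrt hpos.le, ← mul_assoc, ← sq, one_mul, Real.sqrt_pos]
    exact ⟨by ring, hpos⟩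
  · rintro ⟨hz, hτ⟩
    rw [← embed_space z, waveSymbol_embed] at hz
    have hτ0 : 0 < timeCoord z ^ 2 := pow_two_pos_of_ne_zero (right_ne_zero_of_mul hτ.ne')
    have hsq : ‖space z‖ ^ 2 - s = (σ * timeCoord z) ^ 2 := by rw [mul_pow, hσ]; linarith
    refine ⟨space z, show s < ‖space z‖ ^ 2 by linarith, ?_⟩
    rw [sheet, hsq, Real.sqrt_sq hτ.le, ← mul_assoc, ← sq, hσ, one_mul, embed_space]

theorem measurableSet_image_sheet {σ : ℝ} (hσ : σ ^ 2 = 1) (s : ℝ) :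
    MeasurableSet (sheet σ s '' sheetDomain m s) := by
  rw [image_sheet hσ]
  exact (measurableSet_eq_fun continuous_waveSymbol.measurable measurable_const).inter
    (measurableSet_lt measurable_const (continuous_timeCoord.measurable.const_mul σ))

theorem disjoint_sheets (s : ℝ) : Disjoint (sheet 1 s '' sheetDomain m s)
    (sheet (-1) s '' sheetDomain m s) := by
  rw [image_sheet (one_pow 2), image_sheet neg_one_sq, Set.disjoint_left]
  rintro z ⟨-, hpos⟩ ⟨-, hneg⟩
  linarith

theorem hausdorffMeasure_equator [NeZero m] (s : ℝ) :
    μH[(m : ℝ)] {z : Spacetime m | (waveSymbol z = s ∧ z ≠ 0) ∧ timeCoord z = 0} = 0 := by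
  refine measure_mono_null (t := (fun ξ => embed ξ 0) '' Metric.sphere 0 √s) ?_ ?_
  · rintro z ⟨⟨hz, -⟩, hτ⟩
    refine ⟨space z, ?_, by simpa [hτ] using embed_space z⟩
    rw [← embed_space z, waveSymbol_embed, hτ] at hz
    simp [← hz]
  · rw [isometry_embed_zero.hausdorffMeasure_image (Or.inl (by positivity))]
    have := Measure.addHaar_sphere (μH[(Module.finrank ℝ (EuclideanSpace ℝ (Fin m)) : ℝ)])
      (0 : EuclideanSpace ℝ (Fin m)) √s
    rwa [finrank_euclideanSpace_fin] at this

theorem levelMeasure_eq [NeZero m] (s : ℝ) :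
    levelMeasure m s = μH[(m : ℝ)].restrict (sheet 1 s '' sheetDomain m s ∪
      sheet (-1) s '' sheetDomain m s) := by
  refine Measure.restrict_congr_set ?_
  rw [image_sheet (one_pow 2), image_sheet neg_one_sq]
  refine (ae_eq_set (μ := μH[(m : ℝ)])).2 ⟨measure_mono_null ?_ (hausdorffMeasure_equator s), ?_⟩
  · rintro z ⟨hz, hnot⟩
    refine ⟨hz, by_contra fun hτ => ?_⟩
    rcases lt_or_gt_of_ne hτ with hτ | hτ
    · exact hnot (Or.inr ⟨hz.1, by linarith⟩)
    · exact hnot (Or.inl ⟨hz.1, by linarith⟩)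
  · rw [Set.sdiff_eq_empty.2, measure_empty]
    rintro z hz
    refine ⟨hz.elim And.left And.left, ?_⟩
    rintro rfl
    rcases hz with ⟨-, h⟩ | ⟨-, h⟩ <;> simp [timeCoord] at h

/-- A rank-one perturbation of the identity whose determinant is the area distortion of a graph
with gradient `c • a`. -/
theorem exists_equiv_norm_sq_add_inner_sq {E : Type*} [NormedAddCommGroup E]
    [InnerProductSpace ℝ E] [FiniteDimensional ℝ E] (a : E) (c : ℝ) :
    ∃ L : E ≃L[ℝ] E, (∀ v, ‖L v‖ ^ 2 = ‖v‖ ^ 2 + (c * ⟪a, v⟫) ^ 2) ∧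
      |LinearMap.det (L : E →ₗ[ℝ] E)| = √(1 + c ^ 2 * ‖a‖ ^ 2) := by
  set q : ℝ := √(1 + c ^ 2 * ‖a‖ ^ 2)
  have hq : q ^ 2 = 1 + c ^ 2 * ‖a‖ ^ 2 := Real.sq_sqrt (by positivity)
  have hq0 : 0 < q := Real.sqrt_pos.2 (by positivity)
  set β : ℝ := c ^ 2 / (1 + q)
  have hβ : β * (1 + q) = c ^ 2 := div_mul_cancel₀ _ (by positivity)
  have hβa : β * ‖a‖ ^ 2 = q - 1 := by
    have : (1 + q) * (β * ‖a‖ ^ 2) = (1 + q) * (q - 1) := by linear_combination ‖a‖ ^ 2 * hβ - hq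
    exact mul_left_cancel₀ (by positivity) this
  set f : E →ₗ[ℝ] E := LinearMap.transvection (innerₛₗ ℝ a) (β • a)
  have hdet : LinearMap.det f = q := by
    rw [LinearMap.transvection.det, innerₛₗ_apply_apply, inner_smul_right,
      real_inner_self_eq_norm_sq, hβa, add_sub_cancel]
  have hunit : IsUnit (LinearMap.det f) := hdet ▸ hq0.ne'.isUnit
  set e : E ≃ₗ[ℝ] E := LinearEquiv.ofIsUnitDet (f := f) (v := Module.finBasis ℝ E)
    (v' := Module.finBasis ℝ E) (by rwa [LinearMap.det_toMatrix])
  refine ⟨e.toContinuousLinearEquiv, fun v => ?_, ?_⟩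
  · have happly : e.toContinuousLinearEquiv v = v + ⟪a, v⟫ • β • a := rfl
    rw [happly, norm_add_sq_real, inner_smul_right, inner_smul_right, real_inner_comm a v,
      norm_smul, norm_smul, mul_pow, mul_pow, Real.norm_eq_abs, Real.norm_eq_abs, sq_abs, sq_abs,
      mul_pow]
    linear_combination ⟪a, v⟫ ^ 2 * (β * hβa + hβ)
  · have hcoe : ((e.toContinuousLinearEquiv : E ≃L[ℝ] E) : E →ₗ[ℝ] E) = f := rfl
    rw [hcoe, hdet, abs_of_pos hq0]

theorem hasStrictFDerivAt_sheet (σ : ℝ) {s : ℝ} {ξ : EuclideanSpace ℝ (Fin m)}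
    (hξ : ξ ∈ sheetDomain m s) :
    HasStrictFDerivAt (sheet σ s) ((embedCLM m).comp ((ContinuousLinearMap.id ℝ _).prod
      ((σ / √(‖ξ‖ ^ 2 - s)) • innerSL ℝ ξ))) ξ := by
  have hheight : HasStrictFDerivAt (fun y : EuclideanSpace ℝ (Fin m) => σ * √(‖y‖ ^ 2 - s))
      ((σ / √(‖ξ‖ ^ 2 - s)) • innerSL ℝ ξ) ξ := by
    refine ((((hasStrictFDerivAt_norm_sq ξ).sub_const s).sqrt
      (sub_pos.2 hξ).ne').const_mul σ).congr_fderiv ?_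
    rw [← Nat.cast_smul_eq_nsmul ℝ, smul_smul, smul_smul]
    congr 1
    push_cast
    field_simp
  exact (embedCLM m).hasStrictFDerivAt.comp ξ ((hasStrictFDerivAt_id ξ).prodMk hheight)

theorem map_space_hausdorffMeasure_sheet {σ : ℝ} (hσ : σ ^ 2 = 1) (s : ℝ) :
    (μH[(m : ℝ)].restrict (sheet σ s '' sheetDomain m s)).map space =
      (μH[(m : ℝ)].restrict (sheetDomain m s)).withDensity
        fun ξ => ENNReal.ofReal (sheetJacobian s ξ) := by
  have harea := map_hausdorffMeasure_restrict_image (Φ := sheet (m := m) σ s) (P := space)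
    (J := sheetJacobian s) (isOpen_sheetDomain s) (space_sheet σ s) measurable_space
    (fun ξ hξ => ?_) (fun ξ hξ => ?_)
  · rwa [finrank_euclideanSpace_fin] at harea
  · have hne : ‖ξ‖ ^ 2 - s ≠ 0 := (sub_pos.2 hξ).ne'
    unfold sheetJacobian
    fun_prop (disch := assumption)
  · obtain ⟨L, hL, hdet⟩ := exists_equiv_norm_sq_add_inner_sq ξ (σ / √(‖ξ‖ ^ 2 - s))
    refine ⟨_, L, hasStrictFDerivAt_sheet σ hξ, fun v => ?_, ?_⟩
    · rw [← sq_eq_sq₀ (norm_nonneg _) (norm_nonneg _), hL]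
      simp [norm_sq_embed]
    · rw [hdet, sheetJacobian, div_pow, hσ, Real.sq_sqrt (sub_pos.2 hξ).le, one_div_mul_eq_div]

theorem integrableOn_sheet_iff {σ : ℝ} (hσ : σ ^ 2 = 1) (s : ℝ) {f : Spacetime m → ℂ}
    (hf : Continuous f) :
    IntegrableOn f (sheet σ s '' sheetDomain m s) μH[(m : ℝ)] ↔
      IntegrableOn (fun ξ => sheetJacobian s ξ • f (sheet σ s ξ)) (sheetDomain m s)
        μH[(m : ℝ)] := by
  have hspace : IntegrableOn f (sheet σ s '' sheetDomain m s) μH[(m : ℝ)] ↔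
      IntegrableOn ((fun ξ => f (sheet σ s ξ)) ∘ space) (sheet σ s '' sheetDomain m s)
        μH[(m : ℝ)] := by
    refine integrableOn_congr_fun ?_ (measurableSet_image_sheet hσ s)
    rintro _ ⟨ξ, -, rfl⟩
    simp
  rw [hspace, IntegrableOn, ← integrable_map_measure (g := fun ξ => f (sheet σ s ξ))
      (hf.comp (continuous_sheet σ s)).aestronglyMeasurable measurable_space.aemeasurable,
    map_space_hausdorffMeasure_sheet hσ, integrable_withDensity_iff_integrable_smul'
      (measurable_sheetJacobian s).ennreal_ofReal (by simp)]
  simp [IntegrableOn, sheetJacobian, Real.sqrt_nonneg]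

theorem setIntegral_sheet {σ : ℝ} (hσ : σ ^ 2 = 1) (s : ℝ) {f : Spacetime m → ℂ}
    (hf : Continuous f) :
    ∫ z in sheet σ s '' sheetDomain m s, f z ∂μH[(m : ℝ)] =
      ∫ ξ in sheetDomain m s, sheetJacobian s ξ • f (sheet σ s ξ) ∂μH[(m : ℝ)] := by
  have hspace : ∫ z in sheet σ s '' sheetDomain m s, f z ∂μH[(m : ℝ)] =
      ∫ z in sheet σ s '' sheetDomain m s, f (sheet σ s (space z)) ∂μH[(m : ℝ)] := by
    refine setIntegral_congr_fun (measurableSet_image_sheet hσ s) ?_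
    rintro _ ⟨ξ, -, rfl⟩
    simp
  rw [hspace, ← integral_map (φ := space) (f := fun ξ => f (sheet σ s ξ))
      measurable_space.aemeasurable (hf.comp (continuous_sheet σ s)).aestronglyMeasurable,
    map_space_hausdorffMeasure_sheet hσ, integral_withDensity_eq_integral_toReal_smul
      (measurable_sheetJacobian s).ennreal_ofReal (by simp)]
  simp [sheetJacobian, Real.sqrt_nonneg]

end LevelSets

theorem locallyIntegrable_posPow_sub {α : ℝ} (hα : -1 < α) (c : ℝ) :
    LocallyIntegrable fun y => posPow α (y - c) := by
  intro y
  refine ⟨Set.Ioo (y - 1) (y + 1), Ioo_mem_nhds (by linarith) (by linarith), ?_⟩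
  have hpow : IntervalIntegrable (fun z => (z - c) ^ α) volume (y - 1) (y + 1) := by
    simpa only [sub_add_cancel] using
      (intervalIntegral.intervalIntegrable_rpow' hα (a := y - 1 - c)
        (b := y + 1 - c)).comp_sub_right c
  have heq : (fun z => posPow α (z - c)) =
      Set.indicator (Set.Ioi c) fun z => (z - c) ^ α := by
    ext z
    simp only [posPow, Set.indicator_apply, Set.mem_Ioi, sub_pos]
  rw [heq]
  exact ((intervalIntegrable_iff_integrableOn_Ioo_of_le (by linarith)).1 hpow).indicator
    measurableSet_Ioi

section Radial

variable {E F : Type*} [NormedAddCommGroup E] [NormedSpace ℝ E] [FiniteDimensional ℝ E]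
  [Nontrivial E] [MeasurableSpace E] [BorelSpace E] (μ : Measure E) [μ.IsAddHaarMeasure]
  [NormedAddCommGroup F] [NormedSpace ℝ F]

open Module

theorem pow_eq_mul_sq_rpow {d : ℕ} (hd : 1 ≤ d) {y : ℝ} (hy : 0 < y) :
    y ^ (d - 1) = y * (y ^ 2) ^ (((d : ℝ) - 2) / 2) := by
  rw [← Real.rpow_natCast, ← Real.rpow_natCast y 2, ← Real.rpow_mul hy.le, Nat.cast_sub hd,
    Nat.cast_one, Nat.cast_two, mul_div_cancel₀ _ two_ne_zero,
    show (d : ℝ) - 1 = 1 + (d - 2) by ring, Real.rpow_add hy, Real.rpow_one]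

theorem posPow_smul_eq_indicator (α : ℝ) (f : ℝ → F) :
    (fun y => posPow α y • f y) = (Set.Ioi 0).indicator fun y => y ^ α • f y := by
  ext y
  by_cases hy : 0 < y
  · rw [posPow_of_pos α hy, Set.indicator_of_mem (Set.mem_Ioi.2 hy)]
  · rw [posPow_of_nonpos α (not_lt.1 hy), Set.indicator_of_notMem (Set.notMem_Ioi.2 (not_lt.1 hy)),
      zero_smul]

theorem pow_smul_comp_sq {d : ℕ} (hd : 1 ≤ d) (f : ℝ → F) : Set.EqOn
    (fun y => y ^ (d - 1) • f (y ^ 2))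
    (fun y => y ^ ((2 : ℝ) - 1) • (y ^ (2 : ℝ)) ^ (((d : ℝ) - 2) / 2) • f (y ^ (2 : ℝ)))
    (Set.Ioi 0) := fun y hy => by
  simp only
  rw [pow_eq_mul_sq_rpow hd hy, mul_smul, show (2 : ℝ) - 1 = 1 by norm_num, Real.rpow_one,
    Real.rpow_two]

theorem integrable_comp_norm_sq_iff (f : ℝ → F) :
    Integrable (fun x => f (‖x‖ ^ 2)) μ ↔
      Integrable fun y => posPow (((finrank ℝ E : ℝ) - 2) / 2) y • f y := by
  rw [integrable_fun_norm_addHaar μ (f := fun r => f (r ^ 2)), posPow_smul_eq_indicator,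
    integrable_indicator_iff measurableSet_Ioi,
    integrableOn_congr_fun (pow_smul_comp_sq finrank_pos f) measurableSet_Ioi,
    integrableOn_Ioi_comp_rpow_iff' (fun y => y ^ (((finrank ℝ E : ℝ) - 2) / 2) • f y)
      two_ne_zero]

theorem integral_comp_norm_sq (f : ℝ → F) :
    ∫ x, f (‖x‖ ^ 2) ∂μ = (finrank ℝ E * μ.real (Metric.ball 0 1) / 2) •
      ∫ y, posPow (((finrank ℝ E : ℝ) - 2) / 2) y • f y := by
  rw [integral_fun_norm_addHaar μ (fun r => f (r ^ 2)), posPow_smul_eq_indicator,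
    integral_indicator measurableSet_Ioi,
    setIntegral_congr_fun measurableSet_Ioi (pow_smul_comp_sq finrank_pos f),
    ← integral_comp_rpow_Ioi (fun y => y ^ (((finrank ℝ E : ℝ) - 2) / 2) • f y) two_ne_zero]
  simp only [abs_two, mul_smul, integral_smul, div_eq_mul_inv]
  rw [← Nat.cast_smul_eq_nsmul ℝ, inv_smul_smul₀ two_ne_zero]

end Radial

section Character

variable {m : ℕ}

/-- The density of `η σ_s` on each sheet `τ = ±√(p - s)`, as a function of `p = |ξ|²`, where
`H (‖z‖²) = ‖z‖ η(z)`. -/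
def sheetDensity (H : ℝ → ℝ) (s p : ℝ) : ℝ := H (2 * p - s) * posPow (-(1 / 2)) (p - s)

theorem sheetJacobian_mul_eq_sheetDensity {η : Spacetime m → ℝ} {H : ℝ → ℝ}
    (hH : ∀ z, ‖z‖ * η z = H (‖z‖ ^ 2)) {σ : ℝ} (hσ : σ ^ 2 = 1) {s : ℝ}
    {ξ : EuclideanSpace ℝ (Fin m)} (hξ : ξ ∈ sheetDomain m s) :
    sheetJacobian s ξ * η (sheet σ s ξ) = sheetDensity H s (‖ξ‖ ^ 2) := by
  have hpos : 0 < ‖ξ‖ ^ 2 - s := sub_pos.2 hξ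
  have hnorm : ‖sheet σ s ξ‖ ^ 2 = 2 * ‖ξ‖ ^ 2 - s := by
    rw [sheet, norm_sq_embed, mul_pow, hσ, Real.sq_sqrt hpos.le]
    ring
  have hjac : sheetJacobian s ξ = ‖sheet σ s ξ‖ * (√(‖ξ‖ ^ 2 - s))⁻¹ := by
    rw [sheetJacobian, one_add_div hpos.ne', show ‖ξ‖ ^ 2 - s + ‖ξ‖ ^ 2 = ‖sheet σ s ξ‖ ^ 2 by
      rw [hnorm]; ring, Real.sqrt_div' _ hpos.le, Real.sqrt_sq (norm_nonneg _), div_eq_mul_inv]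
  rw [hjac, mul_right_comm, hH, hnorm, sheetDensity, posPow_of_pos _ hpos, Real.sqrt_eq_rpow,
    Real.rpow_neg hpos.le]

theorem indicator_sheetDomain_mul {η : Spacetime m → ℝ} {H : ℝ → ℝ}
    (hH : ∀ z, ‖z‖ * η z = H (‖z‖ ^ 2)) {σ : ℝ} (hσ : σ ^ 2 = 1) (s : ℝ) (w : Spacetime m) :
    (sheetDomain m s).indicator
      (fun ξ => sheetJacobian s ξ • ((η (sheet σ s ξ) : ℂ) * 𝐞 ⟪sheet σ s ξ, w⟫)) =
    fun ξ => (𝐞 (⟪ξ, space w⟫ + σ * (timeCoord w * √(‖ξ‖ ^ 2 - s))) : ℂ) *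
      (sheetDensity H s (‖ξ‖ ^ 2) : ℂ) := by
  ext ξ
  by_cases hξ : ξ ∈ sheetDomain m s
  · rw [Set.indicator_of_mem hξ, ← sheetJacobian_mul_eq_sheetDensity hH hσ hξ, Complex.real_smul,
      sheet, inner_embed, Complex.ofReal_mul, ← mul_assoc, mul_comm, mul_assoc σ,
      mul_comm (timeCoord w)]
  · rw [Set.indicator_of_notMem hξ, sheetDensity,
      posPow_of_nonpos _ (sub_nonpos.2 (not_lt.1 hξ)), mul_zero, Complex.ofReal_zero, mul_zero]

theorem isAddHaarMeasure_hausdorffMeasure_euclideanSpace (m : ℕ) :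
    (μH[(m : ℝ)] : Measure (EuclideanSpace ℝ (Fin m))).IsAddHaarMeasure := by
  have := isAddHaarMeasure_hausdorffMeasure (E := EuclideanSpace ℝ (Fin m))
  rwa [finrank_euclideanSpace_fin] at this

theorem sigmaCheck_eq_integral_fourierChar (η : Spacetime m → ℝ) (s : ℝ) (w : Spacetime m) :
    sigmaCheck η s w = ∫ z, (η z : ℂ) * 𝐞 ⟪z, w⟫ ∂levelMeasure m s := by
  refine integral_congr_ae (Eventually.of_forall fun z => ?_)
  simp only [fourierChar_apply]
  congr 2
  push_cast
  ring

theorem integrable_sheetDensity {E : Type*} [NormedAddCommGroup E] [NormedSpace ℝ E]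
    [FiniteDimensional ℝ E] [MeasurableSpace E] [BorelSpace E] (μ : Measure E)
    [μ.IsAddHaarMeasure] (hE : 2 ≤ Module.finrank ℝ E) {H : ℝ → ℝ} (hH : Continuous H)
    (hHs : HasCompactSupport H) (s : ℝ) :
    Integrable (fun ξ => sheetDensity H s (‖ξ‖ ^ 2)) μ := by
  have : Nontrivial E := Module.nontrivial_of_finrank_pos (R := ℝ) (two_pos.trans_le hE)
  have hα : 0 ≤ ((Module.finrank ℝ E : ℝ) - 2) / 2 := by
    have : (2 : ℝ) ≤ Module.finrank ℝ E := by exact_mod_cast hE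
    linarith
  have hH' : HasCompactSupport fun p : ℝ => H (2 * p - s) :=
    hHs.comp_homeomorph ((Homeomorph.mulLeft₀ 2 two_ne_zero).trans (Homeomorph.subRight s))
  have hcont : Continuous fun p : ℝ =>
      H (2 * p - s) * |p| ^ (((Module.finrank ℝ E : ℝ) - 2) / 2) :=
    (hH.comp (by fun_prop)).mul (continuous_abs.rpow_const fun _ => Or.inr hα)
  have hint := (locallyIntegrable_posPow_sub (α := -(1 / 2)) (by norm_num)
    s).integrable_smul_left_of_hasCompactSupport hcont hH'.mul_right
  rw [integrable_comp_norm_sq_iff μ, posPow_smul_eq_indicator,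
    integrable_indicator_iff measurableSet_Ioi]
  refine hint.integrableOn.congr_fun (fun p hp => ?_) measurableSet_Ioi
  simp only [abs_of_pos (Set.mem_Ioi.1 hp), sheetDensity, smul_eq_mul]
  ring

/-- The sum over the two sheets `τ = ±√(p - s)` of `e(tτ)` times the density of the sheet, as a
function of `p = ‖ξ‖²`. -/
def sheetProfile (H : ℝ → ℝ) (s t p : ℝ) : ℂ :=
  sheetDensity H s p • ((𝐞 (t * √(p - s)) : ℂ) + 𝐞 (-(t * √(p - s))))

theorem integrable_sheetProfile {m : ℕ} (hm : 2 ≤ m) {H : ℝ → ℝ} (hH : Continuous H)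
    (hHs : HasCompactSupport H) (s t : ℝ) :
    Integrable fun ξ : EuclideanSpace ℝ (Fin m) => sheetProfile H s t (‖ξ‖ ^ 2) := by
  have hdens := (integrable_sheetDensity (E := EuclideanSpace ℝ (Fin m)) volume
    (by rwa [finrank_euclideanSpace_fin]) hH hHs s).ofReal (𝕜 := ℂ)
  refine ((integrable_fourierChar_mul (φ := fun ξ => t * √(‖ξ‖ ^ 2 - s))
    (by fun_prop) hdens).add (integrable_fourierChar_mul
    (φ := fun ξ => -(t * √(‖ξ‖ ^ 2 - s))) (by fun_prop) hdens)).congr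
    (Eventually.of_forall fun ξ => ?_)
  simp only [sheetProfile, Pi.add_apply, Complex.real_smul, RCLike.ofReal_eq_complex_ofReal]
  ring

theorem exists_hausdorffMeasure_euclideanSpace_eq_smul (m : ℕ) : ∃ c : ℝ≥0, 0 < c ∧
    (μH[(m : ℝ)] : Measure (EuclideanSpace ℝ (Fin m))) = c • volume := by
  have := isAddHaarMeasure_hausdorffMeasure_euclideanSpace m
  exact ⟨_, Measure.addHaarScalarFactor_pos_of_isAddHaarMeasure _ _,
    Measure.isAddLeftInvariant_eq_smul _ volume⟩

theorem sigmaCheck_eq_integral_sheetProfile (hm : 2 ≤ m) {η : Spacetime m → ℝ}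
    (hη : Continuous η) {H : ℝ → ℝ} (hH : Continuous H) (hHs : HasCompactSupport H)
    (hηH : ∀ z, ‖z‖ * η z = H (‖z‖ ^ 2)) (s : ℝ) (w : Spacetime m) :
    sigmaCheck η s w = ∫ ξ, (𝐞 ⟪ξ, space w⟫ : ℂ) *
      sheetProfile H s (timeCoord w) (‖ξ‖ ^ 2) ∂μH[(m : ℝ)] := by
  have : NeZero m := ⟨by lia⟩
  have := isAddHaarMeasure_hausdorffMeasure_euclideanSpace m
  have hcont : Continuous fun z => (η z : ℂ) * 𝐞 ⟪z, w⟫ := by fun_prop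
  have hdens : ∀ σ : ℝ, Integrable (fun ξ : EuclideanSpace ℝ (Fin m) =>
      (𝐞 (⟪ξ, space w⟫ + σ * (timeCoord w * √(‖ξ‖ ^ 2 - s))) : ℂ) *
        (sheetDensity H s (‖ξ‖ ^ 2) : ℂ)) μH[(m : ℝ)] := fun σ =>
    integrable_fourierChar_mul (by fun_prop)
      (integrable_sheetDensity _ (by rwa [finrank_euclideanSpace_fin]) hH hHs s).ofReal
  have hsheet : ∀ σ : ℝ, σ ^ 2 = 1 →
      IntegrableOn (fun z => (η z : ℂ) * 𝐞 ⟪z, w⟫) (sheet σ s '' sheetDomain m s) μH[(m : ℝ)] ∧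
      ∫ z in sheet σ s '' sheetDomain m s, (η z : ℂ) * 𝐞 ⟪z, w⟫ ∂μH[(m : ℝ)] =
        ∫ ξ, (𝐞 (⟪ξ, space w⟫ + σ * (timeCoord w * √(‖ξ‖ ^ 2 - s))) : ℂ) *
          (sheetDensity H s (‖ξ‖ ^ 2) : ℂ) ∂μH[(m : ℝ)] := fun σ hσ => by
    have hmeas := (isOpen_sheetDomain (m := m) s).measurableSet
    rw [integrableOn_sheet_iff hσ s hcont, setIntegral_sheet hσ s hcont,
      ← integrable_indicator_iff hmeas, ← integral_indicator hmeas,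
      indicator_sheetDomain_mul hηH hσ]
    exact ⟨hdens σ, rfl⟩
  obtain ⟨hint_upper, hupper⟩ := hsheet 1 (by norm_num)
  obtain ⟨hint_lower, hlower⟩ := hsheet (-1) (by norm_num)
  rw [sigmaCheck_eq_integral_fourierChar, levelMeasure_eq, setIntegral_union (disjoint_sheets s)
    (measurableSet_image_sheet (by norm_num) s) hint_upper hint_lower, hupper, hlower,
    ← integral_add (hdens 1) (hdens (-1))]
  refine integral_congr_ae (Eventually.of_forall fun ξ => ?_)
  simp only [sheetProfile, coe_fourierChar_add, one_mul, neg_one_mul, Complex.real_smul]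
  ring

end Character

section Slicing

theorem exists_orthonormalBasis_smul_eq {k : ℕ} (x : EuclideanSpace ℝ (Fin (k + 1))) :
    ∃ b : OrthonormalBasis (Fin (k + 1)) ℝ (EuclideanSpace ℝ (Fin (k + 1))), x = ‖x‖ • b 0 := by
  by_cases hx : x = 0
  · exact ⟨EuclideanSpace.basisFun _ _, by rw [hx, norm_zero, zero_smul]⟩
  have horth : Orthonormal ℝ (Set.domRestrict {0} fun _ : Fin (k + 1) => ‖x‖⁻¹ • x) :=
    ⟨fun _ => norm_smul_inv_norm hx, fun i j hij => (hij (Subsingleton.elim i j)).elim⟩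
  obtain ⟨b, hb⟩ := horth.exists_orthonormalBasis_extension_of_card_eq (by simp)
  exact ⟨b, by rw [hb 0 rfl, smul_inv_smul₀ (norm_ne_zero_iff.2 hx)]⟩

theorem exists_measurableEquiv_cons (k : ℕ) :
    ∃ Ψ : ℝ × EuclideanSpace ℝ (Fin k) ≃ᵐ EuclideanSpace ℝ (Fin (k + 1)),
      MeasurePreserving Ψ (volume.prod volume) volume ∧
        ∀ u v, Ψ (u, v) 0 = u ∧ ‖Ψ (u, v)‖ ^ 2 = u ^ 2 + ‖v‖ ^ 2 := by
  have hsource := (MeasurePreserving.id (volume : Measure ℝ)).prod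
    (EuclideanSpace.volume_preserving_symm_measurableEquiv_toLp (Fin k))
  have hcons := (volume_preserving_piFinSuccAbove (fun _ : Fin (k + 1) => ℝ) 0).symm
  have htarget := (EuclideanSpace.volume_preserving_symm_measurableEquiv_toLp (Fin (k + 1))).symm
  refine ⟨((MeasurableEquiv.refl ℝ).prodCongr (MeasurableEquiv.toLp 2 (Fin k → ℝ)).symm).trans
    ((MeasurableEquiv.piFinSuccAbove (fun _ : Fin (k + 1) => ℝ) 0).symm.trans
      (MeasurableEquiv.toLp 2 (Fin (k + 1) → ℝ))), htarget.comp (hcons.comp hsource),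
    fun u v => ⟨rfl, ?_⟩⟩
  simp only [EuclideanSpace.norm_sq_eq, Fin.sum_univ_succ, Real.norm_eq_abs, sq_abs]
  rfl

theorem exists_measurePreserving_inner_eq {k : ℕ} (x : EuclideanSpace ℝ (Fin (k + 1))) :
    ∃ Φ : ℝ × EuclideanSpace ℝ (Fin k) → EuclideanSpace ℝ (Fin (k + 1)),
      MeasurableEmbedding Φ ∧ MeasurePreserving Φ (volume.prod volume) volume ∧
        ∀ u v, ⟪Φ (u, v), x⟫ = ‖x‖ * u ∧ ‖Φ (u, v)‖ ^ 2 = u ^ 2 + ‖v‖ ^ 2 := by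
  obtain ⟨Ψ, hΨ, hcoord⟩ := exists_measurableEquiv_cons k
  obtain ⟨b, hb⟩ := exists_orthonormalBasis_smul_eq x
  refine ⟨b.repr.symm ∘ Ψ,
    b.repr.symm.toHomeomorph.measurableEmbedding.comp Ψ.measurableEmbedding,
    b.measurePreserving_repr_symm.comp hΨ, fun u v => ⟨?_, ?_⟩⟩
  · conv_lhs => rw [hb]
    rw [real_inner_smul_right, real_inner_comm, ← b.repr_apply_apply, Function.comp_apply,
      LinearIsometryEquiv.apply_symm_apply, (hcoord u v).1]
  · rw [Function.comp_apply, LinearIsometryEquiv.norm_map, (hcoord u v).2]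

theorem integral_fourierChar_inner_mul_comp_norm_sq {k : ℕ} [NeZero k] :
    ∃ c : ℝ, 0 < c ∧ ∀ (x : EuclideanSpace ℝ (Fin (k + 1))) (Q : ℝ → ℂ),
      Integrable (fun ξ : EuclideanSpace ℝ (Fin (k + 1)) => Q (‖ξ‖ ^ 2)) →
      Integrable (fun u : ℝ => ∫ y, posPow (((k : ℝ) - 2) / 2) y • Q (u ^ 2 + y)) ∧
      ∫ ξ : EuclideanSpace ℝ (Fin (k + 1)), (𝐞 ⟪ξ, x⟫ : ℂ) * Q (‖ξ‖ ^ 2) =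
        c • ∫ u : ℝ, (𝐞 (‖x‖ * u) : ℂ) *
          ∫ y, posPow (((k : ℝ) - 2) / 2) y • Q (u ^ 2 + y) := by
  have hk : (0 : ℝ) < k := Nat.cast_pos.2 (NeZero.pos k)
  have hball : 0 < (volume : Measure (EuclideanSpace ℝ (Fin k))).real (Metric.ball 0 1) :=
    ENNReal.toReal_pos (Metric.measure_ball_pos _ _ one_pos).ne' measure_ball_lt_top.ne
  refine ⟨_, div_pos (mul_pos hk hball) two_pos, fun x Q hQ => ?_⟩
  set c := (k : ℝ) * (volume : Measure (EuclideanSpace ℝ (Fin k))).real (Metric.ball 0 1) / 2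
  have hc : c ≠ 0 := (div_pos (mul_pos hk hball) two_pos).ne'
  obtain ⟨Φ, hΦemb, hΦ, hΦeq⟩ := exists_measurePreserving_inner_eq x
  have hfiber : ∀ u : ℝ, ∫ v : EuclideanSpace ℝ (Fin k), Q (u ^ 2 + ‖v‖ ^ 2) =
      c • ∫ y, posPow (((k : ℝ) - 2) / 2) y • Q (u ^ 2 + y) := fun u => by
    rw [integral_comp_norm_sq volume fun y => Q (u ^ 2 + y), finrank_euclideanSpace_fin]
  have hprod : Integrable (fun p : ℝ × EuclideanSpace ℝ (Fin k) => Q (p.1 ^ 2 + ‖p.2‖ ^ 2))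
      (volume.prod volume) :=
    ((hΦ.integrable_comp_emb hΦemb).2 hQ).congr
      (Eventually.of_forall fun p => by simp only [Function.comp_apply, (hΦeq p.1 p.2).2])
  constructor
  · have hslices := hprod.integral_prod_left
    simp only [hfiber] at hslices
    exact (integrable_smul_iff hc _).1 hslices
  · rw [← hΦ.integral_comp hΦemb, integral_prod]
    · simp only [(hΦeq _ _).1, (hΦeq _ _).2, integral_const_mul, hfiber, mul_smul_comm,
        integral_smul]
    · exact (integrable_fourierChar_mul (φ := fun p => ‖x‖ * p.1) (by fun_prop) hprod).congr
        (Eventually.of_forall fun p => by simp only [(hΦeq p.1 p.2).1, (hΦeq p.1 p.2).2])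

end Slicing

section Slices

variable (H : ℝ → ℝ) (α : ℝ)

theorem integral_posPow_smul_sheetDensity (s u : ℝ) (g : ℝ → ℂ) :
    ∫ y, posPow α y • sheetDensity H s (u ^ 2 + y) • g (√(u ^ 2 + y - s)) =
      (2 : ℝ) • ∫ τ in Set.Ioi 0, (H (2 * τ ^ 2 + s) * posPow α (τ ^ 2 - (u ^ 2 - s))) • g τ := by
  calc ∫ y, posPow α y • sheetDensity H s (u ^ 2 + y) • g (√(u ^ 2 + y - s))
      = ∫ v, posPow (-(1 / 2)) v • (posPow α (v - (u ^ 2 - s)) * H (2 * v + s)) • g (√v) := by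
        rw [← integral_sub_right_eq_self _ (u ^ 2 - s)]
        refine integral_congr_ae (Eventually.of_forall fun v => ?_)
        simp only [show u ^ 2 + (v - (u ^ 2 - s)) = v + s by ring, add_sub_cancel_right,
          sheetDensity, show 2 * (v + s) - s = 2 * v + s by ring, smul_smul]
        ring_nf
    _ = ∫ v in Set.Ioi 0,
          v ^ (-(1 / 2) : ℝ) • (posPow α (v - (u ^ 2 - s)) * H (2 * v + s)) • g (√v) := by
        rw [posPow_smul_eq_indicator, integral_indicator measurableSet_Ioi]
    _ = _ := by
        rw [← integral_comp_rpow_Ioi _ (two_ne_zero (α := ℝ)), ← integral_smul]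
        refine setIntegral_congr_fun measurableSet_Ioi fun τ (hτ : 0 < τ) => ?_
        have hcancel : τ * (τ ^ 2) ^ (-(1 / 2) : ℝ) = 1 := by
          rw [Real.rpow_neg (sq_nonneg τ), ← Real.sqrt_eq_rpow, Real.sqrt_sq hτ.le,
            mul_inv_cancel₀ hτ.ne']
        simp only [Real.rpow_two, Real.sqrt_sq hτ.le, show (2 : ℝ) - 1 = 1 by norm_num,
          Real.rpow_one, abs_two, smul_smul]
        congr 1
        linear_combination (2 * (posPow α (τ ^ 2 - (u ^ 2 - s)) * H (2 * τ ^ 2 + s))) * hcancel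

theorem integral_Ioi_smul_fourierChar_add_neg {f : ℝ → ℝ} (hf : Integrable f)
    (heven : ∀ τ, f (-τ) = f τ) (t : ℝ) :
    ∫ τ in Set.Ioi 0, f τ • ((𝐞 (t * τ) : ℂ) + 𝐞 (-(t * τ))) =
      ∫ τ, (𝐞 (t * τ) : ℂ) * (f τ : ℂ) := by
  have hint : ∀ t, Integrable fun τ => (𝐞 (t * τ) : ℂ) * (f τ : ℂ) := fun t =>
    integrable_fourierChar_mul (by fun_prop) hf.ofReal
  have hneg : ∫ τ in Set.Ioi 0, (𝐞 (-t * τ) : ℂ) * (f τ : ℂ) =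
      ∫ τ in Set.Iic 0, (𝐞 (t * τ) : ℂ) * (f τ : ℂ) := by
    rw [← neg_zero, ← integral_comp_neg_Iic, neg_zero]
    simp only [heven, neg_mul_neg]
  rw [← integral_add_compl measurableSet_Iic (hint t), Set.compl_Iic, ← hneg,
    ← integral_add (hint (-t)).integrableOn (hint t).integrableOn]
  refine integral_congr_ae (Eventually.of_forall fun τ => ?_)
  simp only [Complex.real_smul, neg_mul]
  ring

end Slices

section Amplitudes

variable {H : ℝ → ℝ}

/-- The amplitude `(s, τ) ↦ H(2τ² + s)` of `η σ_s` in the time frequency `τ`: on `g⁻¹(s)` one has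
`‖z‖² = 2τ² + s`, and `H(‖z‖²) = ‖z‖ η(z)`. -/
def coneAmplitude (H : ℝ → ℝ) (p : ℝ × ℝ) : ℝ := H (2 * p.2 ^ 2 + p.1)

theorem exists_isAmplitude_univ_eq (hH : ContDiff ℝ ∞ H) (hHs : HasCompactSupport H) {r : ℝ}
    (hr : 0 < r) : ∃ b, IsAmplitude Set.univ b ∧
      ∀ s τ, |s| ≤ r → b (s, τ) = coneAmplitude H (s, τ) := by
  let χ : ContDiffBump (0 : ℝ) := ⟨r, r + 1, hr, lt_add_one r⟩
  obtain ⟨R, hR, hHR⟩ := hHs.exists_pos_le_norm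
  refine ⟨fun p => χ p.1 * coneAmplitude H p, ⟨?_, ?_, Set.subset_univ _⟩, fun s τ hs => ?_⟩
  · exact (χ.contDiff.comp contDiff_fst).mul (hH.comp (by fun_prop))
  · refine HasCompactSupport.intro ((isCompact_closedBall (0 : ℝ) (r + 1)).prod
      (isCompact_closedBall (0 : ℝ) (R + r + 1))) fun p hp => ?_
    rw [Set.mem_prod, not_and_or, mem_closedBall_zero_iff, mem_closedBall_zero_iff, not_le,
      not_le] at hp
    rcases le_or_gt ‖p.1‖ (r + 1) with hs | hs
    · have hτ := hp.resolve_left hs.not_gt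
      rw [Real.norm_eq_abs] at hs hτ
      rw [coneAmplitude, hHR, mul_zero]
      rw [← sq_abs, Real.norm_eq_abs]
      nlinarith [neg_abs_le p.1, le_abs_self (2 * |p.2| ^ 2 + p.1)]
    · rw [χ.zero_of_le_dist (by rw [dist_zero_right]; exact hs.le), zero_mul]
  · simp only [χ.one_of_mem_closedBall (mem_closedBall_zero_iff.2 hs), one_mul]

theorem exists_isAmplitude_pos_eq (hH : ContDiff ℝ ∞ H) (hHs : HasCompactSupport H) {c : ℝ}
    (hc : 0 < c) (hHc : ∀ v < c, H v = 0) : ∃ b, IsAmplitude (Set.Ioi 0) b ∧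
      ∀ s τ, |s| ≤ c / 2 → 0 < τ → b (s, τ) = coneAmplitude H (s, τ) := by
  obtain ⟨b, hb, hbH⟩ := exists_isAmplitude_univ_eq hH hHs (half_pos hc)
  set r := √c / 4 with hr
  have hr₀ : 0 < r := by positivity
  let θ : ℝ → ℝ := fun τ => Real.smoothTransition (τ / r - 1)
  have hθ : ContDiff ℝ ∞ fun p : ℝ × ℝ => θ p.2 :=
    Real.smoothTransition.contDiff.comp (by fun_prop)
  refine ⟨fun p => θ p.2 * b p, { hb.mul_left hθ with tsupport_subset := ?_ },
    fun s τ hs hτ => ?_⟩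
  · have hsupp : tsupport (fun p : ℝ × ℝ => θ p.2) ⊆ Prod.snd ⁻¹' Set.Ici r := by
      refine closure_minimal (fun p hp => ?_) (isClosed_Ici.preimage continuous_snd)
      by_contra hlt
      refine hp (Real.smoothTransition.zero_of_nonpos ?_)
      rw [sub_nonpos, div_le_one hr₀]
      exact (not_le.1 hlt).le
    exact (tsupport_mul_subset_left.trans hsupp).trans
      (Set.preimage_mono (Set.Ici_subset_Ioi.2 hr₀))
  · rcases le_or_gt (2 * r) τ with h | h
    · have hθ₁ : θ τ = 1 := Real.smoothTransition.one_of_one_le (by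
        rw [le_sub_iff_add_le, one_add_one_eq_two, le_div_iff₀ hr₀]
        exact h)
      simp only [hθ₁, one_mul, hbH s τ hs]
    · have hrc : 16 * r ^ 2 = c := by rw [hr, div_pow, Real.sq_sqrt hc.le]; ring
      have hv : 2 * τ ^ 2 + s < c := by nlinarith [le_abs_self s]
      simp only [hbH s τ hs, coneAmplitude, hHc _ hv, mul_zero]

theorem coneAmplitude_neg_snd (H : ℝ → ℝ) (s τ : ℝ) :
    coneAmplitude H (s, -τ) = coneAmplitude H (s, τ) := by
  simp only [coneAmplitude, neg_sq]

theorem integrable_coneAmplitude_mul_posPow (hH : ContDiff ℝ ∞ H) (hHs : HasCompactSupport H)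
    {α : ℝ} (hα : 0 ≤ α) (s κ : ℝ) :
    Integrable fun τ => coneAmplitude H (s, τ) * posPow α (τ ^ 2 - κ) := by
  obtain ⟨b, hb, hbH⟩ := exists_isAmplitude_univ_eq hH hHs (r := |s| + 1) (by positivity)
  simpa only [hbH s _ (le_add_of_nonneg_right zero_le_one)] using hb.integrable_mul_posPow hα s κ

theorem osc_congr {b b' : ℝ × ℝ → ℝ} {s : ℝ} (h : ∀ τ, b (s, τ) = b' (s, τ)) (α κ t : ℝ) :
    osc b α s κ t = osc b' α s κ t := by
  simp only [osc, h]

theorem osc_eq_add_neg {b b' : ℝ × ℝ → ℝ} {s : ℝ} (heven : ∀ τ, b (s, -τ) = b (s, τ))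
    (hb' : IsAmplitude (Set.Ioi 0) b') (hbb' : ∀ τ, 0 < τ → b' (s, τ) = b (s, τ)) {α : ℝ}
    (hα : -1 < α) (κ t : ℝ) : osc b α s κ t = osc b' α s κ t + osc b' α s κ (-t) := by
  have hint := (hb'.hasDecay_of_pos hα).integrable_fourierChar s κ
  have hzero : ∀ τ ≤ 0, b' (s, τ) = 0 := fun τ hτ =>
    image_eq_zero_of_notMem_tsupport fun h => (hb'.tsupport_subset h).not_ge hτ
  rw [osc, osc, osc, ← integral_neg_eq_self (fun τ => (𝐞 (-t * τ) : ℂ) * _),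
    ← integral_add (hint t) (hint (-t)).comp_neg]
  refine integral_congr_ae ?_
  filter_upwards [Measure.ae_ne volume 0] with τ hτ
  simp only [neg_sq, neg_mul_neg]
  rcases hτ.lt_or_gt with h | h
  · rw [hzero τ h.le, hbb' (-τ) (neg_pos.2 h), heven]
    simp
  · rw [hzero (-τ) (neg_nonpos.2 h.le), hbb' τ h]
    simp

/-- Up to a constant, the integral of `e(tτ)` over the points `(ξ, τ)` of the level set
`|ξ|² - τ² = s` for which `ξ` has component `u` along a fixed direction; here `α = (k - 2) / 2`,
where `k` is the number of the remaining components of `ξ`. -/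
def fiberOsc (H : ℝ → ℝ) (α s t u : ℝ) : ℂ := osc (coneAmplitude H) α s (u ^ 2 - s) t

theorem fiberOsc_eq_zero {ρ : ℝ} (hHρ : ∀ v, ρ ≤ v → H v = 0) (α : ℝ) {s u : ℝ}
    (hu : ρ ≤ 2 * u ^ 2 - s) (t : ℝ) : fiberOsc H α s t u = 0 := by
  have hzero : ∀ τ, coneAmplitude H (s, τ) * posPow α (τ ^ 2 - (u ^ 2 - s)) = 0 := fun τ => by
    rcases le_or_gt (τ ^ 2) (u ^ 2 - s) with h | h
    · rw [posPow_of_nonpos _ (sub_nonpos.2 h), mul_zero]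
    · rw [coneAmplitude, hHρ _ (by linarith), zero_mul]
  simp only [fiberOsc, osc, hzero, Complex.ofReal_zero, mul_zero, integral_zero]

end Amplitudes

theorem integral_posPow_smul_sheetProfile {H : ℝ → ℝ} (hH : ContDiff ℝ ∞ H)
    (hHs : HasCompactSupport H) {α : ℝ} (hα : 0 ≤ α) (s t u : ℝ) :
    ∫ y, posPow α y • sheetProfile H s t (u ^ 2 + y) =
      (2 : ℝ) • fiberOsc H α s t u :=
  (integral_posPow_smul_sheetDensity H α s u fun τ =>
    (𝐞 (t * τ) : ℂ) + 𝐞 (-(t * τ))).trans <| congrArg _ <|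
    integral_Ioi_smul_fourierChar_add_neg
      (integrable_coneAmplitude_mul_posPow hH hHs hα s (u ^ 2 - s))
      (fun τ => by rw [coneAmplitude_neg_snd, neg_sq]) t

theorem sigmaCheck_eq_integral_fiberOsc {k : ℕ} (hk : 2 ≤ k) :
    ∃ c : ℝ, 0 < c ∧ ∀ {η : Spacetime (k + 1) → ℝ} {H : ℝ → ℝ}, Continuous η →
      ContDiff ℝ ∞ H → HasCompactSupport H → (∀ z, ‖z‖ * η z = H (‖z‖ ^ 2)) →
      ∀ (s : ℝ) (w : Spacetime (k + 1)),
        Integrable (fiberOsc H (((k : ℝ) - 2) / 2) s (timeCoord w)) ∧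
        sigmaCheck η s w = c • ∫ u : ℝ, (𝐞 (‖space w‖ * u) : ℂ) *
          fiberOsc H (((k : ℝ) - 2) / 2) s (timeCoord w) u := by
  have : NeZero k := ⟨by lia⟩
  have hα : 0 ≤ ((k : ℝ) - 2) / 2 :=
    div_nonneg (sub_nonneg.2 (by exact_mod_cast hk)) zero_le_two
  obtain ⟨a, ha, hhausdorff⟩ := exists_hausdorffMeasure_euclideanSpace_eq_smul (k + 1)
  obtain ⟨c, hc, hslice⟩ := integral_fourierChar_inner_mul_comp_norm_sq (k := k)
  refine ⟨a * (c * 2), by positivity, fun {η H} hη hH hHs hηH s w => ?_⟩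
  obtain ⟨hint, heq⟩ := hslice (space w) _
    (integrable_sheetProfile (by lia) hH.continuous hHs s (timeCoord w))
  simp only [integral_posPow_smul_sheetProfile hH hHs hα] at hint heq
  refine ⟨(integrable_fun_smul_iff (two_ne_zero (α := ℝ)) _).1 hint, ?_⟩
  rw [sigmaCheck_eq_integral_sheetProfile (by lia) hη hH.continuous hHs hηH, hhausdorff,
    integral_smul_nnreal_measure, heq]
  simp only [mul_smul_comm, integral_smul, mul_smul]
  rfl

section ConeAmplitudeBounds

variable {H : ℝ → ℝ}

theorem exists_norm_fiberOsc_le (hH : ContDiff ℝ ∞ H) (hHs : HasCompactSupport H)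
    {α : ℝ} (hα : 0 ≤ α) (K : ℝ) : ∃ C, ∀ u t s : ℝ, |u| ≤ K → |s| ≤ 1 →
      ‖fiberOsc H α s t u‖ ≤ C * (1 + |t|) ^ (-α) := by
  obtain ⟨b, hb, hbH⟩ := exists_isAmplitude_univ_eq hH hHs one_pos
  obtain ⟨C, hC⟩ := (hb.hasDecay hα).bound (K ^ 2 + 1)
  refine ⟨C, fun u t s hu hs => ?_⟩
  rw [fiberOsc, ← osc_congr fun τ => hbH s τ hs]
  exact hC s _ t (abs_sq_sub_le hu hs)

theorem exists_norm_fiberOsc_le_of_small (hH : ContDiff ℝ ∞ H)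
    (hHs : HasCompactSupport H) {c : ℝ} (hc : 0 < c) (hc₂ : c ≤ 2) (hHc : ∀ v < c, H v = 0)
    {α : ℝ} (hα : -1 < α) (K : ℝ) : ∃ C, ∀ u t s : ℝ, |u| ≤ K → |s| ≤ c / 2 →
      ‖fiberOsc H α s t u‖ ≤ C * (1 + |t|) ^ (-(α + 1)) := by
  obtain ⟨b, hb, hbH⟩ := exists_isAmplitude_pos_eq hH hHs hc hHc
  obtain ⟨C, hC⟩ := (hb.hasDecay_of_pos hα).bound (K ^ 2 + 1)
  refine ⟨2 * C, fun u t s hu hs => ?_⟩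
  have hκ : |u ^ 2 - s| ≤ K ^ 2 + 1 := abs_sq_sub_le hu (by linarith)
  rw [fiberOsc, osc_eq_add_neg (coneAmplitude_neg_snd H s) hb (fun τ => hbH s τ hs) hα, mul_assoc,
    two_mul]
  exact norm_add_le_of_le (hC s _ t hκ) (by simpa only [abs_neg] using hC s _ (-t) hκ)

theorem exists_norm_fiberOsc_secondDifference_le (hH : ContDiff ℝ ∞ H)
    (hHs : HasCompactSupport H) {c : ℝ} (hc : 0 < c) (hc₂ : c ≤ 2) (hHc : ∀ v < c, H v = 0)
    {α : ℝ} (hα : -1 < α) (K : ℝ) : ∃ C, ∀ u t s : ℝ, |u| ≤ K → |s| ≤ c / 2 →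
      ‖fiberOsc H α s t u + fiberOsc H α (-s) t u - 2 * fiberOsc H α 0 t u‖ ≤
        C * s ^ 2 * (1 + |t|) ^ (1 - α) := by
  obtain ⟨b, hb, hbH⟩ := exists_isAmplitude_pos_eq hH hHs hc hHc
  obtain ⟨C, hC⟩ := hb.hasSecondDifferenceBound hα K
  refine ⟨2 * C, fun u t s hu hs => ?_⟩
  have hsplit : ∀ s, |s| ≤ c / 2 → fiberOsc H α s t u =
      osc b α s (u ^ 2 - s) t + osc b α s (u ^ 2 - s) (-t) := fun s hs =>
    osc_eq_add_neg (coneAmplitude_neg_snd H s) hb (fun τ => hbH s τ hs) hα _ t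
  have hs₁ : |s| ≤ 1 := by linarith
  rw [hsplit s hs, hsplit (-s) (by rwa [abs_neg]), hsplit 0 (by rw [abs_zero]; positivity),
    mul_assoc 2, mul_assoc 2, two_mul (C * _ * _)]
  refine le_of_eq_of_le (congrArg norm ?_) <| norm_add_le_of_le (hC u t s hu hs₁)
    (by simpa only [abs_neg] using hC u (-t) s hu hs₁)
  ring

end ConeAmplitudeBounds

section SurfaceBounds

theorem norm_integral_fourierChar_mul_le_of_eq_zero {g : ℝ → ℂ} {L B : ℝ} (hL : 0 ≤ L)
    (hB : ∀ u, |u| ≤ L → ‖g u‖ ≤ B) (hzero : ∀ u, L < |u| → g u = 0) (r : ℝ) :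
    ‖∫ u, (𝐞 (r * u) : ℂ) * g u‖ ≤ 2 * L * B := by
  rw [← setIntegral_eq_integral_of_forall_compl_eq_zero (s := Set.Icc (-L) L) fun u hu => by
    rw [hzero u (not_le.1 fun h => hu (abs_le.1 h)), mul_zero]]
  refine (norm_setIntegral_le_of_norm_le_const (C := B) measure_Icc_lt_top
    fun u hu => ?_).trans_eq ?_
  · rw [norm_mul, Circle.norm_coe, one_mul]
    exact hB u (abs_le.2 hu)
  · rw [Real.volume_real_Icc_of_le (by linarith)]
    ring

theorem exists_norm_sigmaCheck_le_mul {k : ℕ} (hk : 2 ≤ k) {η : Spacetime (k + 1) → ℝ}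
    {H : ℝ → ℝ} (hη : Continuous η) (hH : ContDiff ℝ ∞ H) (hHs : HasCompactSupport H)
    (hηH : ∀ z, ‖z‖ * η z = H (‖z‖ ^ 2)) {α : ℝ} (hα : α = ((k : ℝ) - 2) / 2) :
    ∃ L A : ℝ, 0 ≤ A ∧ ∀ (w : Spacetime (k + 1)) (s B : ℝ), |s| ≤ 1 →
      ((∀ u, |u| ≤ L → ‖fiberOsc H α s (timeCoord w) u‖ ≤ B) → ‖sigmaCheck η s w‖ ≤ A * B) ∧
      ((∀ u, |u| ≤ L → ‖fiberOsc H α s (timeCoord w) u + fiberOsc H α (-s) (timeCoord w) u -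
          2 * fiberOsc H α 0 (timeCoord w) u‖ ≤ B) →
        ‖sigmaCheck η s w + sigmaCheck η (-s) w - 2 * sigmaCheck η 0 w‖ ≤ A * B) := by
  obtain ⟨c, hc, hσ⟩ := sigmaCheck_eq_integral_fiberOsc hk
  obtain ⟨ρ, hρ, hHρ⟩ := hHs.exists_pos_le_norm
  refine ⟨ρ + 1, c * (2 * (ρ + 1)), by positivity, fun w s B hs => ?_⟩
  simp only [hα]
  set J := fun s => fiberOsc H (((k : ℝ) - 2) / 2) s (timeCoord w)
  have hJ : ∀ s, Integrable (J s) := fun s => (hσ hη hH hHs hηH s w).1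
  have hσJ : ∀ s, sigmaCheck η s w = c • ∫ u, (𝐞 (‖space w‖ * u) : ℂ) * J s u := fun s =>
    (hσ hη hH hHs hηH s w).2
  have hzero : ∀ s, |s| ≤ 1 → ∀ u, ρ + 1 < |u| → J s u = 0 := fun s hs u hu =>
    fiberOsc_eq_zero (fun v hv => hHρ v (hv.trans (le_abs_self v))) _
      (by nlinarith [sq_abs u, le_abs_self s]) _
  have hbound : ∀ g : ℝ → ℂ, (∀ u, |u| ≤ ρ + 1 → ‖g u‖ ≤ B) → (∀ u, ρ + 1 < |u| → g u = 0) →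
      ‖c • ∫ u, (𝐞 (‖space w‖ * u) : ℂ) * g u‖ ≤ c * (2 * (ρ + 1)) * B := fun g hgB hg => by
    rw [norm_smul, Real.norm_of_nonneg hc.le, mul_assoc]
    exact mul_le_mul_of_nonneg_left
      (norm_integral_fourierChar_mul_le_of_eq_zero (by positivity) hgB hg _) hc.le
  have hchar : ∀ s, Integrable fun u => (𝐞 (‖space w‖ * u) : ℂ) * J s u := fun s =>
    integrable_fourierChar_mul (by fun_prop) (hJ s)
  have hsum : sigmaCheck η s w + sigmaCheck η (-s) w - 2 * sigmaCheck η 0 w =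
      c • ∫ u, (𝐞 (‖space w‖ * u) : ℂ) * (J s u + J (-s) u - 2 * J 0 u) := by
    have hadd : Integrable fun u => (𝐞 (‖space w‖ * u) : ℂ) * J s u +
      (𝐞 (‖space w‖ * u) : ℂ) * J (-s) u := (hchar s).add (hchar (-s))
    rw [hσJ, hσJ, hσJ, mul_smul_comm, ← smul_add, ← smul_sub, ← integral_add (hchar s) (hchar (-s)),
      ← integral_const_mul, ← integral_sub hadd ((hchar 0).const_mul 2)]
    congr 2 with u
    ring
  refine ⟨fun hB => hσJ s ▸ hbound _ hB (hzero s hs), fun hB => hsum ▸ hbound _ hB fun u hu => ?_⟩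
  rw [hzero s hs u hu, hzero (-s) (by rwa [abs_neg]) u hu, hzero 0 (by simp) u hu]
  ring

end SurfaceBounds

section Kernel

theorem norm_intervalIntegral_neg_self_le {E : Type*} [NormedAddCommGroup E] [NormedSpace ℝ E]
    {f : ℝ → E} {M : ℝ → ℝ} {δ : ℝ} (hδ : 0 ≤ δ) (hM : IntervalIntegrable M volume 0 δ)
    (hf : ∀ s, 0 < s → s ≤ δ → ‖f s + f (-s)‖ ≤ M s) :
    ‖∫ s in -δ..δ, f s‖ ≤ ∫ s in 0..δ, M s := by
  by_cases hint : IntervalIntegrable f volume (-δ) δ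
  · have hδ₀ : (0 : ℝ) ∈ Set.uIcc (-δ) δ := Set.mem_uIcc.2 (Or.inl ⟨by linarith, hδ⟩)
    have hneg : IntervalIntegrable f volume (-δ) 0 :=
      hint.mono_set (Set.uIcc_subset_uIcc_left hδ₀)
    have hpos : IntervalIntegrable f volume 0 δ :=
      hint.mono_set (Set.uIcc_subset_uIcc_right hδ₀)
    have hflip : IntervalIntegrable (fun s => f (-s)) volume 0 δ := by
      simpa only [zero_sub, sub_neg_eq_add, zero_add, sub_zero] using
        (hneg.comp_sub_left 0).symm
    have hfold : ∫ s in -δ..δ, f s = ∫ s in 0..δ, f s + f (-s) := by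
      rw [intervalIntegral.integral_add hpos hflip, intervalIntegral.integral_comp_neg, neg_zero,
        add_comm, intervalIntegral.integral_add_adjacent_intervals hneg hpos]
    rw [hfold]
    exact intervalIntegral.norm_integral_le_of_norm_le hδ
      (Eventually.of_forall fun s hs => hf s hs.1 hs.2) hM
  · rw [intervalIntegral.integral_undef hint, norm_zero]
    exact intervalIntegral.integral_nonneg_of_ae_restrict hδ <|
      (ae_restrict_iff' measurableSet_Icc).2 <| by
        filter_upwards [Measure.ae_ne volume 0] with s hs₀ hs
        exact (norm_nonneg _).trans (hf s (hs.1.lt_of_ne' hs₀) hs.2)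

theorem integral_inv_one_add_mul_sq_le {T : ℝ} (hT : 0 < T) (δ : ℝ) :
    ∫ s in 0..δ, (1 + (T * s) ^ 2)⁻¹ ≤ π / 2 / T := by
  rw [intervalIntegral.integral_comp_mul_left (fun x => (1 + x ^ 2)⁻¹) hT.ne',
    integral_inv_one_add_sq, mul_zero, Real.arctan_zero, sub_zero, smul_eq_mul, inv_mul_eq_div]
  gcongr
  exact (Real.arctan_lt_pi_div_two _).le

theorem norm_add_sub_two_mul_le {x y z : ℂ} {B : ℝ} (hx : ‖x‖ ≤ B) (hy : ‖y‖ ≤ B)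
    (hz : ‖z‖ ≤ B) : ‖x + y - 2 * z‖ ≤ 4 * B := by
  have hz₂ : ‖2 * z‖ ≤ 2 * B := by
    rw [norm_mul, Complex.norm_ofNat]
    gcongr
  linarith [norm_sub_le (x + y) (2 * z), norm_add_le x y]

variable {F : ℝ → ℂ} {B T δ δ₀ : ℝ}

theorem norm_secondDifference_div_sq_le (hT : 0 < T) (hδ₀ : 0 < δ₀)
    (hbase : ∀ s, |s| ≤ δ → ‖F s‖ ≤ B) (hsmall : ∀ s, |s| ≤ δ₀ → ‖F s‖ ≤ B / T)
    (hdiff : ∀ s, |s| ≤ δ₀ → ‖F s + F (-s) - 2 * F 0‖ ≤ B * s ^ 2 * T) {s : ℝ} (hs : 0 < s)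
    (hsδ : s ≤ δ) : ‖F s + F (-s) - 2 * F 0‖ / s ^ 2 ≤
      5 * B * T * (1 + (T * s) ^ 2)⁻¹ + 4 * B / δ₀ ^ 2 := by
  have hsδ' : |s| ≤ δ := by rwa [abs_of_pos hs]
  have hδ : 0 ≤ δ := hs.le.trans hsδ
  have hB : 0 ≤ B := (norm_nonneg _).trans (hbase s hsδ')
  have htriangle : ∀ {r B' : ℝ}, 0 ≤ r → s ≤ r → (∀ s, |s| ≤ r → ‖F s‖ ≤ B') →
      ‖F s + F (-s) - 2 * F 0‖ ≤ 4 * B' := fun {r B'} hr hsr h => by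
    exact norm_add_sub_two_mul_le (h s (by rwa [abs_of_pos hs]))
      (h (-s) (by rwa [abs_neg, abs_of_pos hs])) (h 0 (by rwa [abs_zero]))
  rw [div_le_iff₀ (by positivity)]
  rcases le_total s δ₀ with h | h
  · have hD : ‖F s + F (-s) - 2 * F 0‖ * (1 + (T * s) ^ 2) ≤ 5 * B * T * s ^ 2 := by
      have h₁ := hdiff s (by rwa [abs_of_pos hs])
      have h₂ := mul_le_mul_of_nonneg_right (htriangle hδ₀.le h hsmall) (sq_nonneg (T * s))
      have h₃ : 4 * (B / T) * (T * s) ^ 2 = 4 * B * T * s ^ 2 := by field_simp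
      linarith
    rw [← le_div_iff₀ (by positivity)] at hD
    rw [add_mul]
    refine (hD.trans_eq ?_).trans (le_add_of_nonneg_right (by positivity))
    field_simp
  · rw [add_mul]
    refine (htriangle hδ hsδ hbase).trans (le_add_of_nonneg_of_le (by positivity) ?_)
    rw [div_mul_eq_mul_div, le_div_iff₀ (by positivity)]
    gcongr

theorem norm_integral_sub_div_sq_add_sq_le (hT : 0 < T) (hδ : 0 ≤ δ) (hδ₀ : 0 < δ₀)
    (hbase : ∀ s, |s| ≤ δ → ‖F s‖ ≤ B) (hsmall : ∀ s, |s| ≤ δ₀ → ‖F s‖ ≤ B / T)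
    (hdiff : ∀ s, |s| ≤ δ₀ → ‖F s + F (-s) - 2 * F 0‖ ≤ B * s ^ 2 * T) (ε : ℝ) :
    ‖∫ s in -δ..δ, (F s - F 0) / ((s ^ 2 + ε ^ 2 : ℝ) : ℂ)‖ ≤
      (5 * π / 2 + 4 * δ / δ₀ ^ 2) * B := by
  have hB : 0 ≤ B := (norm_nonneg _).trans (hbase 0 (by rwa [abs_zero]))
  have hcont : Continuous fun s => 5 * B * T * (1 + (T * s) ^ 2)⁻¹ :=
    continuous_const.mul (Continuous.inv₀ (by fun_prop) fun s => by positivity)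
  have hconst : Continuous fun _ : ℝ => 4 * B / δ₀ ^ 2 := continuous_const
  refine (norm_intervalIntegral_neg_self_le hδ
    ((hcont.add hconst).intervalIntegrable 0 δ) fun s hs hsδ => ?_).trans ?_
  · have hfold : (F s - F 0) / ((s ^ 2 + ε ^ 2 : ℝ) : ℂ) +
        (F (-s) - F 0) / (((-s) ^ 2 + ε ^ 2 : ℝ) : ℂ) =
        (F s + F (-s) - 2 * F 0) / ((s ^ 2 + ε ^ 2 : ℝ) : ℂ) := by
      rw [neg_sq]
      ring
    rw [hfold, norm_div, Complex.norm_real, Real.norm_of_nonneg (by positivity)]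
    exact (div_le_div_of_nonneg_left (norm_nonneg _) (by positivity)
      (le_add_of_nonneg_right (sq_nonneg ε))).trans
      (norm_secondDifference_div_sq_le hT hδ₀ hbase hsmall hdiff hs hsδ)
  · simp only [Pi.add_apply]
    rw [intervalIntegral.integral_add (hcont.intervalIntegrable 0 δ)
      (hconst.intervalIntegrable 0 δ), intervalIntegral.integral_const_mul,
      intervalIntegral.integral_const, smul_eq_mul, sub_zero]
    calc 5 * B * T * (∫ s in 0..δ, (1 + (T * s) ^ 2)⁻¹) + δ * (4 * B / δ₀ ^ 2)
        ≤ 5 * B * T * (π / 2 / T) + δ * (4 * B / δ₀ ^ 2) := by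
          gcongr
          exact integral_inv_one_add_mul_sq_le hT δ
      _ = (5 * π / 2 + 4 * δ / δ₀ ^ 2) * B := by
          field_simp

end Kernel

theorem exists_sigmaCheck_bounds {k : ℕ} (hk : 2 ≤ k) {η : Spacetime (k + 1) → ℝ}
    {H : ℝ → ℝ} (hη : Continuous η) (hH : ContDiff ℝ ∞ H) (hHs : HasCompactSupport H)
    (hηH : ∀ z, ‖z‖ * η z = H (‖z‖ ^ 2)) {c : ℝ} (hc : 0 < c) (hc₂ : c ≤ 2)
    (hHc : ∀ v < c, H v = 0) {α : ℝ} (hα : α = ((k : ℝ) - 2) / 2) :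
    ∃ A : ℝ, ∀ w : Spacetime (k + 1),
      (∀ s, |s| ≤ 1 → ‖sigmaCheck η s w‖ ≤ A * (1 + |timeCoord w|) ^ (-α)) ∧
      (∀ s, |s| ≤ c / 2 →
        ‖sigmaCheck η s w‖ ≤ A * (1 + |timeCoord w|) ^ (-α) / (1 + |timeCoord w|)) ∧
      ∀ s, |s| ≤ c / 2 → ‖sigmaCheck η s w + sigmaCheck η (-s) w - 2 * sigmaCheck η 0 w‖ ≤
        A * (1 + |timeCoord w|) ^ (-α) * s ^ 2 * (1 + |timeCoord w|) := by
  have hα₀ : 0 ≤ α := hα ▸ div_nonneg (sub_nonneg.2 (by exact_mod_cast hk)) zero_le_two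
  have hα₁ : -1 < α := neg_one_lt_zero.trans_le hα₀
  obtain ⟨L, A, hA, htransfer⟩ := exists_norm_sigmaCheck_le_mul hk hη hH hHs hηH hα
  obtain ⟨C₀, h₀⟩ := exists_norm_fiberOsc_le hH hHs hα₀ L
  obtain ⟨C₁, h₁⟩ := exists_norm_fiberOsc_le_of_small hH hHs hc hc₂ hHc hα₁ L
  obtain ⟨C₂, h₂⟩ := exists_norm_fiberOsc_secondDifference_le hH hHs hc hc₂ hHc hα₁ L
  set C := max C₀ (max C₁ C₂)
  have hC₀ : C₀ ≤ C := le_max_left _ _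
  have hC₁ : C₁ ≤ C := (le_max_left _ _).trans (le_max_right _ _)
  have hC₂ : C₂ ≤ C := (le_max_right _ _).trans (le_max_right _ _)
  have hc₁ : ∀ {s : ℝ}, |s| ≤ c / 2 → |s| ≤ 1 := fun hs => by linarith
  refine ⟨A * C, fun w => ?_⟩
  set T := 1 + |timeCoord w| with hT
  have hT₀ : 0 < T := by positivity
  refine ⟨fun s hs => ?_, fun s hs => ?_, fun s hs => ?_⟩
  · refine ((htransfer w s _ hs).1 fun u hu => h₀ u _ s hu hs).trans ?_
    rw [← hT, mul_assoc]
    gcongr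
  · refine ((htransfer w s _ (hc₁ hs)).1 fun u hu => h₁ u _ s hu hs).trans ?_
    rw [← hT, neg_add, ← sub_eq_add_neg, Real.rpow_sub_one hT₀.ne', mul_assoc, mul_div_assoc,
      mul_div_assoc]
    gcongr
  · refine ((htransfer w s _ (hc₁ hs)).2 fun u hu => h₂ u _ s hu hs).trans ?_
    rw [← hT, sub_eq_neg_add, Real.rpow_add_one hT₀.ne']
    calc A * (C₂ * s ^ 2 * (T ^ (-α) * T)) ≤ A * (C * s ^ 2 * (T ^ (-α) * T)) := by gcongr
      _ = A * C * T ^ (-α) * s ^ 2 * T := by ring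

theorem exists_contDiff_profile {m : ℕ} {η : Spacetime m → ℝ} (hη : ContDiff ℝ ∞ η)
    (hrad : ∀ z z' : Spacetime m, ‖z‖ = ‖z'‖ → η z = η z') (hηs : HasCompactSupport η)
    (hη₀ : (0 : Spacetime m) ∉ tsupport η) : ∃ H : ℝ → ℝ, ContDiff ℝ ∞ H ∧ HasCompactSupport H ∧
      (∃ c, 0 < c ∧ c ≤ 2 ∧ ∀ v < c, H v = 0) ∧ ∀ z, ‖z‖ * η z = H (‖z‖ ^ 2) := by
  obtain ⟨e, he⟩ := exists_norm_eq (Spacetime m) zero_le_one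
  have hnorm : ∀ v : ℝ, ‖√v • e‖ = √v := fun v => by
    rw [norm_smul, he, mul_one, Real.norm_of_nonneg (Real.sqrt_nonneg _)]
  obtain ⟨R, hR, hηR⟩ := hηs.exists_pos_le_norm
  obtain ⟨r, hr, hball⟩ := Metric.mem_nhds_iff.1
    ((isClosed_tsupport η).isOpen_compl.mem_nhds hη₀)
  have hzero : ∀ v < min (r ^ 2) 2, √v * η (√v • e) = 0 := fun v hv => by
    rw [image_eq_zero_of_notMem_tsupport (hball (mem_ball_zero_iff.2 ?_)), mul_zero]
    rw [hnorm, Real.sqrt_lt' hr]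
    exact hv.trans_le (min_le_left _ _)
  have hc : 0 < min (r ^ 2) 2 := by positivity
  refine ⟨fun v => √v * η (√v • e), contDiff_iff_contDiffAt.2 fun v => ?_,
    HasCompactSupport.intro (isCompact_Icc (a := 0) (b := R ^ 2)) fun v hv => ?_,
    ⟨_, hc, min_le_right _ _, hzero⟩, fun z => ?_⟩
  · rcases le_or_gt v 0 with h | h
    · refine (contDiffAt_const (c := (0 : ℝ))).congr_of_eventuallyEq ?_
      filter_upwards [eventually_lt_nhds (h.trans_lt hc)] with x hx using hzero x hx
    · have hsqrt : ContDiffAt ℝ ∞ (fun v : ℝ => √v) v := Real.contDiffAt_sqrt h.ne'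
      exact hsqrt.mul (hη.contDiffAt.comp v (hsqrt.smul contDiffAt_const))
  · rcases lt_or_ge v 0 with h | h
    · rw [Real.sqrt_eq_zero_of_nonpos h.le, zero_mul]
    · rw [hηR _ ?_, mul_zero]
      rw [hnorm, Real.le_sqrt hR.le h]
      exact (not_le.1 fun h' => hv ⟨h, h'⟩).le
  · simp only [Real.sqrt_sq (norm_nonneg z)]
    rw [hrad z (‖z‖ • e) (by rw [norm_smul, he, norm_norm, mul_one])]

end Wave

theorem statement10_general (n m : ℕ) (hn : 4 ≤ n) (hnm : m + 1 = n) (η : Spacetime m → ℝ)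
    (hηsm : ContDiff ℝ ∞ η) (hηrad : ∀ z z' : Spacetime m, ‖z‖ = ‖z'‖ → η z = η z')
    (hηs : HasCompactSupport η) (hη₀ : (0 : Spacetime m) ∉ tsupport η) :
    ∃ C : ℝ, 0 < C ∧ ∀ ε : ℝ, 0 < ε → ∀ w : Spacetime m,
      ‖Kzero η ε w‖ ≤ C * (1 + |timeCoord w|) ^ (((2 : ℝ) - n) / 2 + 1) := by
  obtain ⟨k, rfl⟩ : ∃ k, m = k + 1 := ⟨m - 1, by lia⟩
  obtain ⟨H, hH, hHs, ⟨c, hc, hc₂, hHc⟩, hηH⟩ := exists_contDiff_profile hηsm hηrad hηs hη₀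
  obtain ⟨A, hσ⟩ := exists_sigmaCheck_bounds (by lia) hηsm.continuous hH hHs hηH hc hc₂ hHc rfl
  refine ⟨(5 * π / 2 + 4 * (1 / 10) / (c / 2) ^ 2) * max A 1, by positivity, fun ε _ w => ?_⟩
  obtain ⟨hbase, hsmall, hdiff⟩ := hσ w
  have hexp : ((2 : ℝ) - n) / 2 + 1 = -(((k : ℝ) - 2) / 2) := by
    rw [← hnm]
    push_cast
    ring
  rw [hexp, mul_assoc]
  refine (norm_integral_sub_div_sq_add_sq_le (by positivity) (by norm_num) (half_pos hc)
    (fun s hs => hbase s (hs.trans (by norm_num))) hsmall hdiff ε).trans ?_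
  gcongr
  exact le_max_left _ _

end

/-- For `n ≥ 5`, `δ = 1/10`, and any smooth radial bump function `η`
supported on `{1/4 ≤ ‖z‖ ≤ 5/4}`, there is a constant `C > 0` (depending only on `n` and
`η`, independent of `ε` and `x`) such that for every `ε > 0` and every `(x,t)`,
`|K₀^ε(x,t)| ≤ C (1+|t|)^{(2-n)/2 + 1}`. -/
theorem statement10 (n m : ℕ) (hn : 5 ≤ n) (hnm : m + 1 = n)
    (η : Spacetime m → ℝ)
    (hηsm : ContDiff ℝ (⊤ : ℕ∞) η)
    (hηrad : ∀ z z' : Spacetime m, ‖z‖ = ‖z'‖ → η z = η z')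
    (hηsupp : ∀ z : Spacetime m, η z ≠ 0 → 1 / 4 ≤ ‖z‖ ∧ ‖z‖ ≤ 5 / 4) :
    ∃ C : ℝ, 0 < C ∧ ∀ ε : ℝ, 0 < ε → ∀ w : Spacetime m,
      ‖Kzero η ε w‖ ≤ C * (1 + |timeCoord w|) ^ (((2 : ℝ) - n) / 2 + 1) := by
  refine statement10_general n m (by lia) hnm η hηsm hηrad
    (HasCompactSupport.intro (isCompact_closedBall 0 (5 / 4)) fun z hz => ?_) fun h => ?_
  · by_contra h
    exact hz (mem_closedBall_zero_iff.2 (hηsupp z h).2)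
  · have hnorm : (1 / 4 : ℝ) ≤ ‖(0 : Spacetime m)‖ :=
      closure_minimal (t := {z | 1 / 4 ≤ ‖z‖}) (fun z hz => (hηsupp z hz).1)
        (isClosed_le continuous_const continuous_norm) h
    norm_num at hnorm
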